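/- arXiv:math/0403250 — 2 statements merged into one kernel-verified Lean document; each statement's English description precedes it below -/
import Mathlib

section
/- Let B = H_{1,c}(Γ). For every finite-dimensional irreducible B-module Y, one has Ext¹_B(Y, Y) = 0; equivalently, the Hochschild cohomology H¹(B, End_ℂ Y) vanishes, where End_ℂ Y is a B-bimodule via the algebra homomorphism B → End_ℂ Y. -/
noncomputable section

/-- `SL(2,ℂ)`. -/
abbrev SL2 : Type := Matrix.SpecialLinearGroup (Fin 2) ℂ

/-- Generator `γ ∈ Γ` in the free algebra on `Γ ⊕ {x, y}`. -/
def bG (Γ : Subgroup SL2) (γ : Γ) : FreeAlgebra ℂ (Γ ⊕ Fin 2) :=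
  FreeAlgebra.ι ℂ (Sum.inl γ)

/-- The generator `x` (resp. `y`) for `p = 0` (resp. `p = 1`). -/
def bX (Γ : Subgroup SL2) (p : Fin 2) : FreeAlgebra ℂ (Γ ⊕ Fin 2) :=
  FreeAlgebra.ι ℂ (Sum.inr p)

/-- The general vector `v = v₀ x + v₁ y` of `L = ℂ²` inside the free algebra. -/
def bV (Γ : Subgroup SL2) (v : Fin 2 → ℂ) : FreeAlgebra ℂ (Γ ⊕ Fin 2) :=
  v 0 • bX Γ 0 + v 1 • bX Γ 1

/-- The defining relations of the symplectic reflection algebra `H_{1,c}(Γ)` of rank 1: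
the group relations of `Γ`, the relations `γ v γ⁻¹ = γ(v)` for `v ∈ L = ℂ²`, and the
relation `xy - yx = λ(c) = 1 + ∑_{γ ≠ 1} c_γ γ`. -/
inductive BRel (Γ : Subgroup SL2) [Fintype Γ] [DecidableEq Γ] (c : Γ → ℂ) :
    FreeAlgebra ℂ (Γ ⊕ Fin 2) → FreeAlgebra ℂ (Γ ⊕ Fin 2) → Prop
  | grp_mul (γ δ : Γ) : BRel Γ c (bG Γ γ * bG Γ δ) (bG Γ (γ * δ))
  | grp_one : BRel Γ c (bG Γ 1) 1
  | grp_conj (γ : Γ) (v : Fin 2 → ℂ) :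
      BRel Γ c (bG Γ γ * bV Γ v * bG Γ γ⁻¹)
        (bV Γ (Matrix.mulVec ((γ : SL2) : Matrix (Fin 2) (Fin 2) ℂ) v))
  | comm : BRel Γ c (bX Γ 0 * bX Γ 1 - bX Γ 1 * bX Γ 0)
      (1 + ∑ γ ∈ Finset.univ.filter (fun γ : Γ => γ ≠ 1), c γ • bG Γ γ)

/-- The symplectic reflection algebra `B = H_{1,c}(Γ)` of rank 1. -/
abbrev Hone (Γ : Subgroup SL2) [Fintype Γ] [DecidableEq Γ] (c : Γ → ℂ) : Type :=
  RingQuot (BRel Γ c)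

/-- The image of the group element `γ ∈ Γ` in `H_{1,c}(Γ)`. -/
def oneG (Γ : Subgroup SL2) [Fintype Γ] [DecidableEq Γ] (c : Γ → ℂ) (γ : Γ) : Hone Γ c :=
  RingQuot.mkAlgHom ℂ (BRel Γ c) (bG Γ γ)

/-- The image of `x` (`p = 0`) resp. `y` (`p = 1`) in `H_{1,c}(Γ)`. -/
def oneX (Γ : Subgroup SL2) [Fintype Γ] [DecidableEq Γ] (c : Γ → ℂ) (p : Fin 2) : Hone Γ c :=
  RingQuot.mkAlgHom ℂ (BRel Γ c) (bX Γ p)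

/-- A bimodule structure (compatible with the `ℂ`-structures) on a `ℂ`-vector space `E`
over a `ℂ`-algebra `A`: commuting left and right `A`-actions `l` and `r`. -/
structure BimodStr (A : Type) [Ring A] [Algebra ℂ A]
    (E : Type) [AddCommGroup E] [Module ℂ E] where
  l : A → E →ₗ[ℂ] E
  r : A → E →ₗ[ℂ] E
  l_one : l 1 = LinearMap.id
  l_mul : ∀ a b, l (a * b) = l a ∘ₗ l b
  l_add : ∀ a b, l (a + b) = l a + l b
  l_smul : ∀ (z : ℂ) (a), l (z • a) = z • l a
  r_one : r 1 = LinearMap.id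
  r_mul : ∀ a b, r (a * b) = r b ∘ₗ r a
  r_add : ∀ a b, r (a + b) = r a + r b
  r_smul : ∀ (z : ℂ) (a), r (z • a) = z • r a
  comm : ∀ a b, l a ∘ₗ r b = r b ∘ₗ l a

variable {A : Type} [Ring A] [Algebra ℂ A] {E : Type} [AddCommGroup E] [Module ℂ E]

/-- The space `C^n(A, E)` of Hochschild `n`-cochains: `n`-linear maps `A^n → E`. -/
abbrev Cochain (A : Type) [Ring A] [Algebra ℂ A] (E : Type) [AddCommGroup E] [Module ℂ E]
    (n : ℕ) : Type :=
  MultilinearMap ℂ (fun _ : Fin n => A) E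

/-- The Hochschild differential:
`(dφ)(a₀, …, aₙ) = a₀ · φ(a₁, …, aₙ) + ∑ᵢ (-1)^(i+1) φ(a₀, …, aᵢ aᵢ₊₁, …, aₙ)
  + (-1)^(n+1) φ(a₀, …, a_{n-1}) · aₙ`. -/
def dF (β : BimodStr A E) {n : ℕ} (φ : Cochain A E n) (a : Fin (n + 1) → A) : E :=
  β.l (a 0) (φ fun i => a i.succ)
    + ∑ i : Fin n, ((-1 : ℂ) ^ ((i : ℕ) + 1)) •
        φ (fun j => if (j : ℕ) < (i : ℕ) then a j.castSucc
            else if (j : ℕ) = (i : ℕ) then a j.castSucc * a j.succ else a j.succ)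
    + ((-1 : ℂ) ^ (n + 1)) • β.r (a (Fin.last n)) (φ fun i => a i.castSucc)

lemma dF_add (β : BimodStr A E) {n : ℕ} (φ ψ : Cochain A E n) (a : Fin (n + 1) → A) :
    dF β (φ + ψ) a = dF β φ a + dF β ψ a := by
  simp only [dF, MultilinearMap.add_apply, map_add, smul_add, Finset.sum_add_distrib]
  abel

lemma dF_smul (β : BimodStr A E) {n : ℕ} (z : ℂ) (φ : Cochain A E n) (a : Fin (n + 1) → A) :
    dF β (z • φ) a = z • dF β φ a := by
  simp only [dF, MultilinearMap.smul_apply, map_smul, smul_add, Finset.smul_sum,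
    smul_comm _ z]

lemma dF_zero (β : BimodStr A E) {n : ℕ} (a : Fin (n + 1) → A) :
    dF β (0 : Cochain A E n) a = 0 := by
  simp [dF]

/-- The space `Z^n(A, E)` of Hochschild `n`-cocycles. -/
def Zc (β : BimodStr A E) (n : ℕ) : Submodule ℂ (Cochain A E n) where
  carrier := {φ | ∀ a, dF β φ a = 0}
  zero_mem' := fun a => dF_zero β a
  add_mem' := fun hφ hψ a => by rw [dF_add, hφ a, hψ a, add_zero]
  smul_mem' := fun z φ hφ a => by rw [dF_smul, hφ a, smul_zero]

/-- The space `B^{n+1}(A, E)` of Hochschild `(n+1)`-coboundaries. -/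
def Bc (β : BimodStr A E) (n : ℕ) : Submodule ℂ (Cochain A E (n + 1)) where
  carrier := {φ | ∃ ψ : Cochain A E n, ∀ a, φ a = dF β ψ a}
  zero_mem' := ⟨0, fun a => (dF_zero β a).symm⟩
  add_mem' := by
    rintro φ₁ φ₂ ⟨ψ₁, h₁⟩ ⟨ψ₂, h₂⟩
    exact ⟨ψ₁ + ψ₂, fun a => by
      rw [MultilinearMap.add_apply, dF_add, h₁ a, h₂ a]⟩
  smul_mem' := by
    rintro z φ ⟨ψ, h⟩
    exact ⟨z • ψ, fun a => by rw [MultilinearMap.smul_apply, dF_smul, h a]⟩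

/-- The Hochschild cohomology `H^{n+1}(A, E)` as a quotient of cocycles by coboundaries. -/
abbrev HH (β : BimodStr A E) (n : ℕ) : Type :=
  ↥(Zc β (n + 1)) ⧸ (Bc β n).comap (Zc β (n + 1)).subtype

/-- The bimodule structure on `End_ℂ Y` induced by an algebra homomorphism
`ρ : A → End_ℂ Y`. -/
def bimodEnd {Y : Type} [AddCommGroup Y] [Module ℂ Y] (ρ : A →ₐ[ℂ] Module.End ℂ Y) :
    BimodStr A (Module.End ℂ Y) where
  l a := LinearMap.mulLeft ℂ (ρ a)
  r a := LinearMap.mulRight ℂ (ρ a)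
  l_one := by ext e; simp
  l_mul a b := by ext e; simp [mul_assoc]
  l_add a b := by ext e; simp [add_mul]
  l_smul z a := by ext e; simp [smul_mul_assoc]
  r_one := by ext e; simp
  r_mul a b := by ext e; simp [mul_assoc]
  r_add a b := by ext e; simp [mul_add]
  r_smul z a := by ext e; simp [mul_smul_comm]
  comm a b := by ext e; simp [mul_assoc]
end

/-!
A Hochschild 1-cocycle with values in `End Y` is a derivation `d` of `B` along `ρ`, and a
coboundary is an inner derivation. Averaging over `Γ` makes `d` vanish on `Γ`; it is then determined
by its restriction `f` to `L = ℂ²`, an element of `V = Hom_Γ(L, End Y)`.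

The space `V` carries the symplectic form `⟨f, g⟩ = tr (f x * g y) - tr (f y * g x)`. Write `ξ ∈ V`
for the action of `L` on `Y` and let `D : End_Γ Y → V` send `a` to `⁅ξ ·, a⁆`. Up to sign,
`⟨D a, f⟩` is the trace of `a` times the derivative of the commutator `⁅ξ x, ξ y⁆` in the direction
`f`. This commutator lies in the image of `ℂ[Γ]`, hence commutes with `End_Γ Y` and is
infinitesimally preserved by `d`: the range of `D` is isotropic, and `f` is orthogonal to it.

It remains to see that the range of `D` is Lagrangian. The kernel of `D` consists of the
endomorphisms of the `B`-module `Y`, which are scalars, so the rank of `D` is `dim (End_Γ Y) - 1`.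
Taking the trace of `xy - yx = λ(c)` on `Y` shows that the character of `Y` does not vanish
identically on `Γ \ {1}`, and character theory then gives `dim V < 2 dim (End_Γ Y)`, since the
character of `L` has real part less than `2` away from `1`.
-/

section UnitaryTrick

open scoped ComplexOrder MatrixOrder Matrix

variable {G n V L : Type*} [Group G] [Fintype n] [DecidableEq n]
  [AddCommGroup V] [Module ℂ V] [FiniteDimensional ℂ V]
  [AddCommGroup L] [Module ℂ L] [FiniteDimensional ℂ L]

theorem exists_units_conj_mem_unitaryGroup [Finite G] (M : G →* Matrix n n ℂ) :
    ∃ P : (Matrix n n ℂ)ˣ, ∀ g, P.val * M g * P.inv ∈ Matrix.unitaryGroup n ℂ := by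
  have := Fintype.ofFinite G
  set H : Matrix n n ℂ := ∑ g, (M g)ᴴ * M g with hH
  have H_posDef : H.PosDef := by
    classical
    rw [hH, ← Finset.add_sum_erase _ _ (Finset.mem_univ (1 : G))]
    refine Matrix.PosDef.add_posSemidef (by simpa using Matrix.PosDef.one) ?_
    exact Matrix.posSemidef_sum _ fun g _ => Matrix.posSemidef_conjTranspose_mul_self _
  have H_invariant (g : G) : (M g)ᴴ * H * M g = H := by
    rw [hH, Finset.mul_sum, Finset.sum_mul,
      ← Equiv.sum_comp (Equiv.mulRight g) fun h => (M h)ᴴ * M h]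
    exact Finset.sum_congr rfl fun h _ => by simp [Matrix.mul_assoc]
  obtain ⟨_, ⟨P, rfl⟩, hP⟩ := CStarAlgebra.isStrictlyPositive_iff_eq_star_mul_self.mp
    H_posDef.isStrictlyPositive
  refine ⟨P, fun g => Matrix.mem_unitaryGroup_iff'.mpr ?_⟩
  calc star (P.val * M g * P.inv) * (P.val * M g * P.inv)
      = star P.inv * ((M g)ᴴ * (star P.val * P.val) * M g) * P.inv := by
        simp only [star_mul, Matrix.star_eq_conjTranspose, Matrix.mul_assoc]
    _ = star (P.val * P.inv) * (P.val * P.inv) := by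
        rw [← hP, H_invariant, hP, star_mul]
        simp only [Matrix.mul_assoc]
    _ = 1 := by simp

theorem exists_basis_toMatrix_mem_unitaryGroup [Finite G] (σ : Representation ℂ G V) :
    ∃ b : Module.Basis (Fin (Module.finrank ℂ V)) ℂ V,
      ∀ g, LinearMap.toMatrix b b (σ g) ∈ Matrix.unitaryGroup _ ℂ := by
  let b := Module.finBasis ℂ V
  obtain ⟨P, hP⟩ := exists_units_conj_mem_unitaryGroup
    ((LinearMap.toMatrixAlgEquiv b).toAlgHom.toMonoidHom.comp σ)
  let e := LinearMap.GeneralLinearGroup.toLinearEquiv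
    (Units.map (Matrix.toLinAlgEquiv b).toAlgHom.toMonoidHom P⁻¹)
  refine ⟨b.map e, fun g => ?_⟩
  have toMatrix_map : LinearMap.toMatrix (b.map e) (b.map e) (σ g) =
      P.val * LinearMap.toMatrix b b (σ g) * P.inv := by
    have e_eq : e.toLinearMap = Matrix.toLin b b P.inv := rfl
    have e_symm_eq : e.symm.toLinearMap = Matrix.toLin b b P.val := rfl
    rw [LinearMap.toMatrix_map_left, LinearMap.toMatrix_map_right, e_eq, e_symm_eq,
      LinearMap.toMatrix_comp b b b, LinearMap.toMatrix_comp b b b, LinearMap.toMatrix_toLin,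
      LinearMap.toMatrix_toLin, ← Matrix.mul_assoc]
  exact toMatrix_map ▸ hP g

theorem re_trace_lt_card_of_mem_unitaryGroup {U : Matrix n n ℂ}
    (hU : U ∈ Matrix.unitaryGroup n ℂ) (hne : U ≠ 1) : U.trace.re < Fintype.card n := by
  have expand : (U - 1)ᴴ * (U - 1) = 1 - Uᴴ - U + 1 := by
    rw [Matrix.conjTranspose_sub, Matrix.conjTranspose_one, sub_mul, mul_sub, mul_sub,
      ← Matrix.star_eq_conjTranspose, Matrix.mem_unitaryGroup_iff'.mp hU]
    noncomm_ring
  have trace_pos : 0 < ((U - 1)ᴴ * (U - 1)).trace :=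
    (Matrix.posSemidef_conjTranspose_mul_self _).trace_nonneg.lt_of_ne' <| by
      rwa [Ne, Matrix.trace_conjTranspose_mul_self_eq_zero_iff, sub_eq_zero]
  have re_pos := (Complex.lt_def.mp trace_pos).1
  simp only [expand, Matrix.trace_add, Matrix.trace_sub, Matrix.trace_conjTranspose,
    Matrix.trace_one, Complex.add_re, Complex.sub_re, Complex.natCast_re, Complex.zero_re,
    Complex.star_def, Complex.conj_re] at re_pos
  linarith

theorem character_inv_eq_star [Finite G] (σ : Representation ℂ G V) (g : G) :
    σ.character g⁻¹ = star (σ.character g) := by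
  obtain ⟨b, hb⟩ := exists_basis_toMatrix_mem_unitaryGroup σ
  have mul_inv : LinearMap.toMatrix b b (σ g) * LinearMap.toMatrix b b (σ g⁻¹) = 1 := by
    rw [← LinearMap.toMatrix_mul, ← map_mul, mul_inv_cancel, map_one, LinearMap.toMatrix_one]
  have star_eq := left_inv_eq_right_inv (Matrix.mem_unitaryGroup_iff'.mp (hb g)) mul_inv
  rw [Representation.character, Representation.character, LinearMap.trace_eq_matrix_trace ℂ b,
    LinearMap.trace_eq_matrix_trace ℂ b, ← star_eq, Matrix.star_eq_conjTranspose,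
    Matrix.trace_conjTranspose]

theorem re_character_lt_finrank [Finite G] (σ : Representation ℂ G V) {g : G} (hg : σ g ≠ 1) :
    (σ.character g).re < Module.finrank ℂ V := by
  obtain ⟨b, hb⟩ := exists_basis_toMatrix_mem_unitaryGroup σ
  rw [Representation.character, LinearMap.trace_eq_matrix_trace ℂ b]
  have toMatrix_ne_one : LinearMap.toMatrix b b (σ g) ≠ 1 := by
    rwa [← LinearMap.toMatrix_one b, (LinearMap.toMatrix b b).injective.ne_iff]
  simpa using re_trace_lt_card_of_mem_unitaryGroup (hb g) toMatrix_ne_one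

theorem re_character_le_finrank [Finite G] (σ : Representation ℂ G V) (g : G) :
    (σ.character g).re ≤ Module.finrank ℂ V := by
  by_cases hg : σ g = 1
  · simp [Representation.character, hg]
  · exact (re_character_lt_finrank σ hg).le

theorem card_mul_finrank_invariants [Fintype G] (σ : Representation ℂ G V) :
    (Nat.card G : ℝ) * Module.finrank ℂ σ.invariants = ∑ g, (σ.character g).re := by
  have card_ne_zero : (Nat.card G : ℂ) ≠ 0 := by simp
  let : Invertible (Nat.card G : ℂ) := invertibleOfNonzero card_ne_zero
  have average := Representation.card_inv_mul_sum_char_eq_finrank σ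
  rw [inv_mul_eq_iff_eq_mul₀ card_ne_zero] at average
  simpa using (congrArg Complex.re average).symm

theorem character_linHom_self [Finite G] (σ : Representation ℂ G V) (g : G) :
    (σ.linHom σ).character g = Complex.normSq (σ.character g) := by
  rw [Representation.char_linHom, character_inv_eq_star, Complex.star_def,
    Complex.normSq_eq_conj_mul_self]

theorem finrank_invariants_linHom_lt [Finite G] (τ : Representation ℂ G L)
    (σ : Representation ℂ G V) (h : ∃ g, τ g ≠ 1 ∧ σ.character g ≠ 0) :
    Module.finrank ℂ (τ.linHom (σ.linHom σ)).invariants <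
      Module.finrank ℂ L * Module.finrank ℂ (σ.linHom σ).invariants := by
  have := Fintype.ofFinite G
  obtain ⟨g₀, hτ, hσ⟩ := h
  have sum_lt : ∑ g, (τ.character g⁻¹).re * Complex.normSq (σ.character g) <
      ∑ g, Module.finrank ℂ L * Complex.normSq (σ.character g) := by
    refine Finset.sum_lt_sum (fun g _ => ?_) ⟨g₀, Finset.mem_univ _, ?_⟩
    · exact mul_le_mul_of_nonneg_right (re_character_le_finrank τ _) (Complex.normSq_nonneg _)
    · refine mul_lt_mul_of_pos_right ?_ (Complex.normSq_pos.mpr hσ)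
      simpa [character_inv_eq_star] using re_character_lt_finrank τ hτ
  have card_mul_lt : (Nat.card G : ℝ) * Module.finrank ℂ (τ.linHom (σ.linHom σ)).invariants <
      Nat.card G * (Module.finrank ℂ L * Module.finrank ℂ (σ.linHom σ).invariants) := by
    rw [mul_left_comm, card_mul_finrank_invariants, card_mul_finrank_invariants, Finset.mul_sum]
    simpa only [Representation.char_linHom τ, character_linHom_self, Complex.re_mul_ofReal,
      Complex.ofReal_re] using sum_lt
  exact_mod_cast lt_of_mul_lt_mul_left card_mul_lt (Nat.cast_nonneg _)

end UnitaryTrick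

section Lagrangian

variable {K V E : Type*} [Field K] [AddCommGroup V] [Module K V] {B : LinearMap.BilinForm K V}

theorem sup_span_singleton_le_orthogonal (hB : B.IsAlt) {I : Submodule K V}
    (hI : I ≤ B.orthogonal I) {v : V} (hv : v ∈ B.orthogonal I) :
    I ⊔ Submodule.span K {v} ≤ B.orthogonal (I ⊔ Submodule.span K {v}) := by
  have v_perp : v ∈ B.orthogonal (I ⊔ Submodule.span K {v}) := by
    intro w hw
    obtain ⟨i, hi, _, hz, rfl⟩ := Submodule.mem_sup.mp hw
    obtain ⟨z, rfl⟩ := Submodule.mem_span_singleton.mp hz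
    have hiv : B i v = 0 := hv i hi
    simp [hiv, hB.self_eq_zero v]
  refine sup_le (fun i hi w hw => ?_) ((Submodule.span_singleton_le_iff_mem _ _).mpr v_perp)
  obtain ⟨j, hj, _, hz, rfl⟩ := Submodule.mem_sup.mp hw
  obtain ⟨z, rfl⟩ := Submodule.mem_span_singleton.mp hz
  have hji : B j i = 0 := hI hi j hj
  have hvi : B v i = 0 := hB.isRefl i v (hv i hi)
  simp [hji, hvi]

variable [FiniteDimensional K V] [AddCommGroup E] [Module K E] [FiniteDimensional K E]

theorem two_mul_finrank_le_of_le_orthogonal (hB : B.Nondegenerate) {I : Submodule K V}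
    (hI : I ≤ B.orthogonal I) : 2 * Module.finrank K I ≤ Module.finrank K V := by
  have finrank_le := Submodule.finrank_mono hI
  rw [LinearMap.BilinForm.finrank_orthogonal hB] at finrank_le
  have := Submodule.finrank_le I
  omega

theorem orthogonal_le_of_le_orthogonal (hB : B.Nondegenerate) (hB' : B.IsAlt)
    {I : Submodule K V} (hI : I ≤ B.orthogonal I)
    (hdim : Module.finrank K V ≤ 2 * Module.finrank K I + 1) : B.orthogonal I ≤ I := by
  intro v hv
  by_contra hvI
  have finrank_lt := Submodule.finrank_lt_finrank_of_lt <| left_lt_sup.mpr <|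
    mt (Submodule.span_singleton_le_iff_mem v I).mp hvI
  have := two_mul_finrank_le_of_le_orthogonal hB (sup_span_singleton_le_orthogonal hB' hI hv)
  omega

theorem orthogonal_range_le_range (hB : B.Nondegenerate) (hB' : B.IsAlt) {D : E →ₗ[K] V}
    (hD : LinearMap.range D ≤ B.orthogonal (LinearMap.range D))
    (hker : Module.finrank K (LinearMap.ker D) ≤ 1)
    (hdim : Module.finrank K V < 2 * Module.finrank K E) :
    B.orthogonal (LinearMap.range D) ≤ LinearMap.range D := by
  have := LinearMap.finrank_range_add_finrank_ker D
  exact orthogonal_le_of_le_orthogonal hB hB' hD (by omega)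

theorem exists_mem_apply_eq_of_isotropic (hB : B.IsAlt) {W : Submodule K V} {F : Submodule K E}
    (hW : (B.restrict W).SeparatingLeft) {D : E →ₗ[K] V} (hD : ∀ a ∈ F, D a ∈ W)
    (hiso : ∀ a ∈ F, ∀ b ∈ F, B (D a) (D b) = 0) {e : E}
    (hker : ∀ a ∈ F, D a = 0 → a ∈ Submodule.span K {e})
    (hdim : Module.finrank K W < 2 * Module.finrank K F) {w : V} (hw : w ∈ W)
    (horth : ∀ a ∈ F, B (D a) w = 0) : ∃ a ∈ F, D a = w := by
  have isAlt : (B.restrict W).IsAlt := fun v => hB v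
  have nondegenerate : (B.restrict W).Nondegenerate :=
    (LinearMap.IsRefl.nondegenerate_iff_separatingLeft isAlt.isRefl).mpr hW
  have isotropic : LinearMap.range (D.restrict hD) ≤
      (B.restrict W).orthogonal (LinearMap.range (D.restrict hD)) := by
    rintro _ ⟨b, rfl⟩ _ ⟨a, rfl⟩
    exact hiso a a.2 b b.2
  have finrank_ker_le_one : Module.finrank K (LinearMap.ker (D.restrict hD)) ≤ 1 := by
    rw [← Submodule.finrank_map_subtype_eq]
    refine (Submodule.finrank_mono ?_).trans (finrank_span_le_card {e} |>.trans (by simp))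
    rintro _ ⟨a, ha, rfl⟩
    exact hker a a.2 (congrArg Subtype.val ha)
  have w_perp : ⟨w, hw⟩ ∈ (B.restrict W).orthogonal (LinearMap.range (D.restrict hD)) := by
    rintro _ ⟨a, rfl⟩
    exact horth a a.2
  obtain ⟨⟨a, ha⟩, ha_eq⟩ :=
    orthogonal_range_le_range nondegenerate isAlt isotropic finrank_ker_le_one hdim w_perp
  exact ⟨a, ha, congrArg Subtype.val ha_eq⟩

end Lagrangian

section InvariantForm

variable {R G V : Type*} [CommRing R] [Group G] [Fintype G] [Invertible (Fintype.card G : R)]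
  [AddCommGroup V] [Module R V] {B : LinearMap.BilinForm R V} {π : Representation R G V}

theorem apply_averageMap_of_mem_invariants (hB : ∀ g v w, B (π g v) (π g w) = B v w) {v : V}
    (hv : v ∈ π.invariants) (w : V) : B v (π.averageMap w) = B v w := by
  have apply_smul (g : G) : B v (π g w) = B v w := by
    rw [← hB g v w, hv g]
  simp [GroupAlgebra.average, apply_smul, ← mul_assoc]

theorem separatingLeft_restrict_invariants (hB : ∀ g v w, B (π g v) (π g w) = B v w)
    (hsep : B.SeparatingLeft) : (B.restrict π.invariants).SeparatingLeft := by
  rintro ⟨v, hv⟩ hperp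
  refine Subtype.ext (hsep v fun w => ?_)
  rw [← apply_averageMap_of_mem_invariants hB hv]
  exact hperp ⟨π.averageMap w, π.averageMap_invariant w⟩

end InvariantForm

section Commutator

variable {R M E : Type*} [CommRing R] [AddCommGroup M] [Module R M] [Ring E] [Algebra R E]

/-- The map sending `a` to the linear map `m ↦ ⁅f m, a⁆`. When `f` is an algebra homomorphism these
are the inner derivations along `f`; when `f` is the action of `x` and `y`, it is the infinitesimal
conjugation of `f` by `a`. -/
noncomputable def commutatorMap (f : M →ₗ[R] E) : E →ₗ[R] M →ₗ[R] E :=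
  ((LinearMap.mul R E - (LinearMap.mul R E).flip) ∘ₗ f).flip

@[simp]
theorem commutatorMap_apply (f : M →ₗ[R] E) (a : E) (m : M) : commutatorMap f a m = ⁅f m, a⁆ :=
  rfl

/-- The derivative of `ξ ↦ ⁅ξ x, ξ y⁆` at `ξ` in the direction `f`, where `x`, `y` is the standard
basis of `R²`. -/
def commutatorDeriv (ξ f : (Fin 2 → R) →ₗ[R] E) : E :=
  ⁅ξ (Pi.single 0 1), f (Pi.single 1 1)⁆ + ⁅f (Pi.single 0 1), ξ (Pi.single 1 1)⁆

theorem commutatorDeriv_commutatorMap (ξ : (Fin 2 → R) →ₗ[R] E) (a : E) :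
    commutatorDeriv ξ (commutatorMap ξ a) = ⁅⁅ξ (Pi.single 0 1), ξ (Pi.single 1 1)⁆, a⁆ := by
  simp only [commutatorDeriv, commutatorMap_apply, Ring.lie_def]
  noncomm_ring

end Commutator

section SymplecticTraceForm

variable {R Y : Type*} [CommRing R] [AddCommGroup Y] [Module R Y]

variable (R Y) in
/-- The tensor product of the standard symplectic form on the dual of `R²` with the trace form
`(a, b) ↦ tr (a * b)` on `End Y`. -/
noncomputable def symplecticTraceForm :
    LinearMap.BilinForm R ((Fin 2 → R) →ₗ[R] Module.End R Y) :=
  LinearMap.mk₂ R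
    (fun f g => LinearMap.trace R Y (f (Pi.single 0 1) * g (Pi.single 1 1)) -
      LinearMap.trace R Y (f (Pi.single 1 1) * g (Pi.single 0 1)))
    (by intros; simp only [LinearMap.add_apply, add_mul, map_add]; ring)
    (by intros; simp only [LinearMap.smul_apply, smul_mul_assoc, map_smul, smul_sub])
    (by intros; simp only [LinearMap.add_apply, mul_add, map_add]; ring)
    (by intros; simp only [LinearMap.smul_apply, mul_smul_comm, map_smul, smul_sub])

theorem symplecticTraceForm_apply (f g : (Fin 2 → R) →ₗ[R] Module.End R Y) :
    symplecticTraceForm R Y f g =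
      LinearMap.trace R Y (f (Pi.single 0 1) * g (Pi.single 1 1)) -
        LinearMap.trace R Y (f (Pi.single 1 1) * g (Pi.single 0 1)) :=
  rfl

theorem symplecticTraceForm_isAlt : (symplecticTraceForm R Y).IsAlt := by
  intro f
  rw [symplecticTraceForm_apply, LinearMap.trace_mul_comm, sub_self]

theorem eq_zero_of_forall_trace_mul_eq_zero [Module.Finite R Y] [Module.Free R Y]
    {a : Module.End R Y} (h : ∀ b, LinearMap.trace R Y (a * b) = 0) : a = 0 := by
  ext y
  rw [LinearMap.zero_apply, ← Module.forall_dual_apply_eq_zero_iff R]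
  intro φ
  have mul_smulRight : a * φ.smulRight y = φ.smulRight (a y) := by ext; simp
  rw [← LinearMap.trace_smulRight, ← mul_smulRight, h]

theorem symplecticTraceForm_separatingLeft [Module.Finite R Y] [Module.Free R Y] :
    (symplecticTraceForm R Y).SeparatingLeft := by
  intro f hf
  have apply_x : f (Pi.single 0 1) = 0 := eq_zero_of_forall_trace_mul_eq_zero fun b => by
    simpa [symplecticTraceForm_apply] using hf (LinearMap.smulRight (LinearMap.proj 1) b)
  have apply_y : f (Pi.single 1 1) = 0 := eq_zero_of_forall_trace_mul_eq_zero fun b => by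
    simpa [symplecticTraceForm_apply] using hf (LinearMap.smulRight (LinearMap.proj 0) b)
  refine LinearMap.pi_ext' (Fin.forall_fin_two.mpr ⟨LinearMap.ext_ring ?_, LinearMap.ext_ring ?_⟩)
  · simpa using apply_x
  · simpa using apply_y

theorem symplecticTraceForm_comp (f g : (Fin 2 → R) →ₗ[R] Module.End R Y)
    (T : Module.End R (Fin 2 → R)) :
    symplecticTraceForm R Y (f ∘ₗ T) (g ∘ₗ T) =
      LinearMap.det T * symplecticTraceForm R Y f g := by
  obtain ⟨M, rfl⟩ := Matrix.toLin'.surjective T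
  have apply_single (h : (Fin 2 → R) →ₗ[R] Module.End R Y) (j : Fin 2) :
      h (Matrix.toLin' M (Pi.single j 1)) =
        M 0 j • h (Pi.single 0 1) + M 1 j • h (Pi.single 1 1) := by
    rw [← map_smul, ← map_smul, ← map_add]
    congr 1
    ext i; fin_cases i <;> simp
  simp only [symplecticTraceForm_apply, LinearMap.comp_apply, apply_single, LinearMap.det_toLin',
    Matrix.det_fin_two, add_mul, mul_add, map_add, smul_mul_assoc, mul_smul_comm, map_smul,
    smul_eq_mul]
  ring

theorem symplecticTraceForm_linHom {G : Type*} [Group G] {τ : Representation R G (Fin 2 → R)}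
    (hτ : ∀ g, LinearMap.det (τ g) = 1) (σ : Representation R G Y) (g : G)
    (f₁ f₂ : (Fin 2 → R) →ₗ[R] Module.End R Y) :
    symplecticTraceForm R Y (τ.linHom (σ.linHom σ) g f₁) (τ.linHom (σ.linHom σ) g f₂) =
      symplecticTraceForm R Y f₁ f₂ := by
  have trace_conj (a b : Module.End R Y) :
      LinearMap.trace R Y (σ.linHom σ g a * σ.linHom σ g b) = LinearMap.trace R Y (a * b) := by
    calc LinearMap.trace R Y (σ g * (a * σ g⁻¹) * (σ g * (b * σ g⁻¹)))
        = LinearMap.trace R Y (σ g * (a * (σ g⁻¹ * σ g) * b * σ g⁻¹)) := by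
          simp only [mul_assoc]
      _ = LinearMap.trace R Y (a * (σ g⁻¹ * σ g) * b * (σ g⁻¹ * σ g)) := by
          rw [LinearMap.trace_mul_comm, mul_assoc]
      _ = LinearMap.trace R Y (a * b) := by
          rw [← map_mul, inv_mul_cancel, map_one, mul_one, mul_one]
  calc _ = symplecticTraceForm R Y (f₁ ∘ₗ τ g⁻¹) (f₂ ∘ₗ τ g⁻¹) := by
        simp only [Representation.linHom_apply τ, symplecticTraceForm_apply, LinearMap.comp_apply,
          trace_conj]
    _ = symplecticTraceForm R Y f₁ f₂ := by rw [symplecticTraceForm_comp, hτ, one_mul]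

/-- The moment map of the conjugation action is `ξ ↦ ⁅ξ x, ξ y⁆`. -/
theorem symplecticTraceForm_commutatorMap (ξ f : (Fin 2 → R) →ₗ[R] Module.End R Y)
    (a : Module.End R Y) :
    symplecticTraceForm R Y (commutatorMap ξ a) f =
      -LinearMap.trace R Y (a * commutatorDeriv ξ f) := by
  have trace_cycle (u v : Module.End R Y) :
      LinearMap.trace R Y (u * (a * v)) = LinearMap.trace R Y (a * (v * u)) := by
    rw [LinearMap.trace_mul_comm, mul_assoc]
  simp only [symplecticTraceForm_apply, commutatorMap_apply, commutatorDeriv, Ring.lie_def,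
    sub_mul, mul_add, mul_sub, map_add, map_sub, mul_assoc, trace_cycle]
  ring

end SymplecticTraceForm

section InvariantCommutator

variable {R G L Y : Type*} [CommRing R] [Group G] [AddCommGroup L] [Module R L]
  [AddCommGroup Y] [Module R Y] {τ : Representation R G L} {σ : Representation R G Y}

theorem mem_invariants_linHom_self_iff {a : Module.End R Y} :
    a ∈ (σ.linHom σ).invariants ↔ ∀ g, Commute (σ g) a := by
  refine (Representation.mem_linHom_invariants_iff_isIntertwining a).trans ?_
  simp only [Representation.isIntertwiningMap_iff, Commute, SemiconjBy, LinearMap.ext_iff,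
    Module.End.mul_apply, eq_comm]

theorem mem_invariants_linHom_linHom_iff {f : L →ₗ[R] Module.End R Y} :
    f ∈ (τ.linHom (σ.linHom σ)).invariants ↔ ∀ g v, f (τ g v) * σ g = σ g * f v := by
  refine (Representation.mem_linHom_invariants_iff_isIntertwining f).trans ?_
  rw [Representation.isIntertwiningMap_iff]
  refine forall₂_congr fun g v => ?_
  change f (τ g v) = σ g * (f v * σ g⁻¹) ↔ _
  rw [← mul_assoc]
  exact Units.eq_mul_inv_iff_mul_eq (Units.map σ (toUnits g))

theorem commutatorMap_mem_invariants {ξ : L →ₗ[R] Module.End R Y}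
    (hξ : ξ ∈ (τ.linHom (σ.linHom σ)).invariants) {a : Module.End R Y}
    (ha : a ∈ (σ.linHom σ).invariants) :
    commutatorMap ξ a ∈ (τ.linHom (σ.linHom σ)).invariants := by
  rw [mem_invariants_linHom_linHom_iff] at hξ ⊢
  rw [mem_invariants_linHom_self_iff] at ha
  intro g v
  simp only [commutatorMap_apply]
  calc ⁅ξ (τ g v), a⁆ * σ g = ⁅ξ (τ g v) * σ g, a⁆ := by
        rw [Ring.lie_def, Ring.lie_def, sub_mul, mul_assoc, mul_assoc, mul_assoc, (ha g).eq]
    _ = σ g * ⁅ξ v, a⁆ := by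
        rw [hξ, Ring.lie_def, Ring.lie_def, mul_sub, ← mul_assoc a, ← (ha g).eq, mul_assoc,
          mul_assoc]

end InvariantCommutator

section InvariantLagrangian

variable {K G Y : Type*} [Field K] [Group G] [AddCommGroup Y] [Module K Y]
  {τ : Representation K G (Fin 2 → K)} {σ : Representation K G Y}
  {ξ : (Fin 2 → K) →ₗ[K] Module.End K Y}

theorem exists_commutatorMap_eq_of_commutatorDeriv_eq_zero [Fintype G]
    [Invertible (Fintype.card G : K)] [FiniteDimensional K Y]
    (hτ : ∀ g, LinearMap.det (τ g) = 1)
    (hdim : Module.finrank K (τ.linHom (σ.linHom σ)).invariants <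
      2 * Module.finrank K (σ.linHom σ).invariants)
    (hξ : ξ ∈ (τ.linHom (σ.linHom σ)).invariants)
    (hcomm : ∀ a ∈ (σ.linHom σ).invariants, Commute ⁅ξ (Pi.single 0 1), ξ (Pi.single 1 1)⁆ a)
    (hscalar : ∀ a ∈ (σ.linHom σ).invariants, (∀ v, Commute (ξ v) a) →
      a ∈ Submodule.span K {(1 : Module.End K Y)})
    {f : (Fin 2 → K) →ₗ[K] Module.End K Y} (hf : f ∈ (τ.linHom (σ.linHom σ)).invariants)
    (hf' : commutatorDeriv ξ f = 0) :
    ∃ a ∈ (σ.linHom σ).invariants, commutatorMap ξ a = f := by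
  have orthogonal (a : Module.End K Y) {f : (Fin 2 → K) →ₗ[K] Module.End K Y}
      (hf : commutatorDeriv ξ f = 0) : symplecticTraceForm K Y (commutatorMap ξ a) f = 0 := by
    rw [symplecticTraceForm_commutatorMap, hf, mul_zero, map_zero, neg_zero]
  have isotropic : ∀ a ∈ (σ.linHom σ).invariants, ∀ b ∈ (σ.linHom σ).invariants,
      symplecticTraceForm K Y (commutatorMap ξ a) (commutatorMap ξ b) = 0 :=
    fun a _ b hb => orthogonal a <| by
      rw [commutatorDeriv_commutatorMap, (hcomm b hb).lie_eq]
  exact exists_mem_apply_eq_of_isotropic symplecticTraceForm_isAlt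
    (separatingLeft_restrict_invariants (symplecticTraceForm_linHom hτ σ)
      symplecticTraceForm_separatingLeft)
    (fun a => commutatorMap_mem_invariants hξ) isotropic
    (fun a ha h => hscalar a ha fun v => commute_iff_lie_eq.mpr (LinearMap.congr_fun h v))
    hdim hf (fun a _ => orthogonal a hf')

end InvariantLagrangian

section Derivation

variable {R G A E : Type*} [CommRing R] [Group G] [Ring A] [Algebra R A] [Ring E] [Algebra R E]
  {ρ : A →ₐ[R] E}

/-- The module of derivations of `A` with values in `E`, viewed as an `A`-bimodule along `ρ`. -/
def derivationsAlong (ρ : A →ₐ[R] E) : Submodule R (A →ₗ[R] E) where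
  carrier := {d | ∀ a b, d (a * b) = ρ a * d b + d a * ρ b}
  zero_mem' a b := by simp
  add_mem' hd he a b := by
    simp only [LinearMap.add_apply, hd a b, he a b, mul_add, add_mul]
    abel
  smul_mem' z d hd a b := by
    simp only [LinearMap.smul_apply, hd a b, smul_add, mul_smul_comm, smul_mul_assoc]

theorem commutatorMap_mem_derivationsAlong (ρ : A →ₐ[R] E) (x : E) :
    commutatorMap ρ.toLinearMap x ∈ derivationsAlong ρ := by
  intro a b
  simp only [commutatorMap_apply, AlgHom.toLinearMap_apply, map_mul, Ring.lie_def]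
  noncomm_ring

theorem eq_zero_of_mem_derivationsAlong {d : A →ₗ[R] E} (hd : d ∈ derivationsAlong ρ) {s : Set A}
    (hs : Algebra.adjoin R s = ⊤) (h : ∀ a ∈ s, d a = 0) : d = 0 := by
  have map_one : d 1 = 0 := by simpa using hd 1 1
  ext a
  induction hs.ge (Algebra.mem_top (x := a)) using Algebra.adjoin_induction with
  | mem a ha => exact h a ha
  | algebraMap r => simp [Algebra.algebraMap_eq_smul_one, map_one]
  | add a b _ _ ha hb => simp [ha, hb]
  | mul a b _ _ ha hb => simp_all [hd a b]

theorem commute_of_forall_mem_commute {s : Set A} (hs : Algebra.adjoin R s = ⊤) {x : E}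
    (h : ∀ a ∈ s, Commute (ρ a) x) (a : A) : Commute (ρ a) x := by
  have inner_eq_zero := eq_zero_of_mem_derivationsAlong (commutatorMap_mem_derivationsAlong ρ x) hs
    fun a ha => (h a ha).lie_eq
  exact commute_iff_lie_eq.mpr (LinearMap.congr_fun inner_eq_zero a)

theorem derivation_lie {d : A →ₗ[R] E} (hd : d ∈ derivationsAlong ρ) (a b : A) :
    d ⁅a, b⁆ = ⁅ρ a, d b⁆ + ⁅d a, ρ b⁆ := by
  rw [Ring.lie_def, map_sub, hd a b, hd b a, Ring.lie_def, Ring.lie_def]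
  abel

theorem exists_forall_eq_lie_of_crossed [Fintype G] [Invertible (Fintype.card G : R)]
    (u : G →* E) {d : G → E} (hd : ∀ g h, d (g * h) = u g * d h + d g * u h) :
    ∃ x : E, ∀ g, d g = ⁅u g, x⁆ := by
  set S := ∑ h, d h * u h⁻¹ with hS
  have card_smul (g : G) : (Fintype.card G : R) • d g = ⁅S, u g⁆ := by
    have S_mul : S * u g = ∑ h, d (g * h) * u h⁻¹ := by
      rw [hS, Finset.sum_mul, ← Equiv.sum_comp (Equiv.mulLeft g)]
      exact Finset.sum_congr rfl fun h _ => by simp [mul_assoc, ← map_mul]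
    have expand (h : G) : d (g * h) * u h⁻¹ = u g * (d h * u h⁻¹) + d g := by
      rw [hd, add_mul, mul_assoc, mul_assoc, ← map_mul u h, mul_inv_cancel, map_one, mul_one]
    simp [Ring.lie_def, S_mul, expand, Finset.sum_add_distrib, ← Finset.mul_sum, ← hS,
      Nat.cast_smul_eq_nsmul]
  refine ⟨-(⅟(Fintype.card G : R) • S), fun g => ?_⟩
  rw [← invOf_smul_smul (Fintype.card G : R) (d g), card_smul]
  simp [Ring.lie_def, sub_eq_add_neg, add_comm]

theorem exists_sub_commutatorMap_apply_eq_zero [Fintype G] [Invertible (Fintype.card G : R)]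
    (u : G →* A) {d : A →ₗ[R] E} (hd : d ∈ derivationsAlong ρ) :
    ∃ x : E, ∀ g, (d - commutatorMap ρ.toLinearMap x) (u g) = 0 := by
  obtain ⟨x, hx⟩ := exists_forall_eq_lie_of_crossed (R := R) ((ρ : A →* E).comp u)
    (d := fun g => d (u g)) fun g h => by rw [map_mul, hd]; rfl
  exact ⟨x, fun g => sub_eq_zero.mpr (hx g)⟩

end Derivation

theorem Zc_one_le_Bc_zero {A Y : Type} [Ring A] [Algebra ℂ A] [AddCommGroup Y] [Module ℂ Y]
    {ρ : A →ₐ[ℂ] Module.End ℂ Y}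
    (h : derivationsAlong ρ ≤ LinearMap.range (commutatorMap ρ.toLinearMap)) :
    Zc (bimodEnd ρ) 1 ≤ Bc (bimodEnd ρ) 0 := by
  intro φ hφ
  let d := (MultilinearMap.ofSubsingleton ℂ A (Module.End ℂ Y) (0 : Fin 1)).symm φ
  have apply_eq (a : Fin 1 → A) : φ a = d (a 0) :=
    congrArg φ (funext fun i => congrArg a (Subsingleton.elim i 0))
  have mem : d ∈ derivationsAlong ρ := by
    intro a b
    have cocycle : ρ a * d b + -d (a * b) + d a * ρ b = 0 := by
      simpa [dF, apply_eq, bimodEnd] using hφ ![a, b]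
    rw [← sub_eq_zero, ← neg_eq_zero, ← cocycle]
    abel
  obtain ⟨ψ, hψ⟩ := h mem
  refine ⟨MultilinearMap.constOfIsEmpty ℂ _ ψ, fun a => ?_⟩
  rw [apply_eq, ← hψ]
  simp [dF, bimodEnd, Ring.lie_def, sub_eq_add_neg]

theorem exists_ne_one_character_ne_zero {K G Y : Type*} [Field K] [CharZero K] [Group G] [Fintype G]
    [AddCommGroup Y] [Module K Y] [FiniteDimensional K Y] [Nontrivial Y]
    {σ : Representation K G Y} {c : G → K} (hc : c 1 ≠ 0) {a b : Module.End K Y}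
    (h : ⁅a, b⁆ = ∑ g, c g • σ g) : ∃ g ≠ 1, σ.character g ≠ 0 := by
  by_contra! character_eq_zero
  have trace_eq_zero : ∑ g, c g * σ.character g = 0 := by
    calc ∑ g, c g * σ.character g = LinearMap.trace K Y ⁅a, b⁆ := by
          simp [h, Representation.character]
      _ = 0 := LinearMap.trace_lie a b
  rw [Finset.sum_eq_single 1 (fun g _ hg => by rw [character_eq_zero g hg, mul_zero]) (by simp),
    Representation.char_one] at trace_eq_zero
  exact mul_ne_zero hc (Nat.cast_ne_zero.mpr Module.finrank_pos.ne') trace_eq_zero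

theorem mem_span_one_of_forall_commute {K Y ι : Type*} [Field K] [IsAlgClosed K]
    [AddCommGroup Y] [Module K Y] [FiniteDimensional K Y] [Nontrivial Y] {T : ι → Module.End K Y}
    (hirr : ∀ U : Submodule K Y, (∀ i, U.map (T i) ≤ U) → U = ⊥ ∨ U = ⊤) {a : Module.End K Y}
    (ha : ∀ i, Commute (T i) a) : a ∈ Submodule.span K {(1 : Module.End K Y)} := by
  obtain ⟨z, hz⟩ := Module.End.exists_eigenvalue a
  have eigenspace_eq_top : a.eigenspace z = ⊤ := by
    refine (hirr _ fun i => Submodule.map_le_iff_le_comap.mpr ?_).resolve_left hz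
    exact Module.End.mapsTo_genEigenspace_of_comm (ha i).symm z 1
  refine Submodule.mem_span_singleton.mpr ⟨z, LinearMap.ext fun y => ?_⟩
  exact (Module.End.mem_eigenspace_iff.mp (eigenspace_eq_top.ge (Submodule.mem_top (x := y)))).symm

section EquivariantPair

variable {R G L A Y : Type*} [CommRing R] [Group G] [AddCommGroup L] [Module R L] [Ring A]
  [Algebra R A] [AddCommGroup Y] [Module R Y] {τ : Representation R G L} {u : G →* A}
  {v : L →ₗ[R] A} {ρ : A →ₐ[R] Module.End R Y}

/-- The representation of `G` obtained by restricting the `A`-module `ρ` along `u`. -/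
def restrictRep (ρ : A →ₐ[R] Module.End R Y) (u : G →* A) : Representation R G Y :=
  (ρ : A →* Module.End R Y).comp u

@[simp]
theorem restrictRep_apply (g : G) : restrictRep ρ u g = ρ (u g) :=
  rfl

theorem toLinearMap_comp_mem_invariants (huv : ∀ g x, v (τ g x) * u g = u g * v x) :
    ρ.toLinearMap ∘ₗ v ∈ (τ.linHom ((restrictRep ρ u).linHom (restrictRep ρ u))).invariants := by
  refine mem_invariants_linHom_linHom_iff.mpr fun g x => ?_
  simp [← map_mul, huv]

theorem derivation_comp_mem_invariants (huv : ∀ g x, v (τ g x) * u g = u g * v x)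
    {d : A →ₗ[R] Module.End R Y} (hd : d ∈ derivationsAlong ρ) (hdu : ∀ g, d (u g) = 0) :
    d ∘ₗ v ∈ (τ.linHom ((restrictRep ρ u).linHom (restrictRep ρ u))).invariants := by
  refine mem_invariants_linHom_linHom_iff.mpr fun g x => ?_
  simpa [hd _ _, hdu] using congrArg d (huv g x)

end EquivariantPair

section SymplecticPair

variable {G A Y : Type*} [Group G] [Fintype G] [Ring A] [Algebra ℂ A] [AddCommGroup Y]
  [Module ℂ Y] [FiniteDimensional ℂ Y] {τ : Representation ℂ G (Fin 2 → ℂ)} {u : G →* A}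
  {v : (Fin 2 → ℂ) →ₗ[ℂ] A} {ρ : A →ₐ[ℂ] Module.End ℂ Y} {c : G → ℂ}

theorem exists_commutatorMap_eq_of_apply_eq_zero [Nontrivial Y] (hτ : ∀ g, LinearMap.det (τ g) = 1)
    (hτ' : Function.Injective τ) (huv : ∀ g x, v (τ g x) * u g = u g * v x) (hc : c 1 ≠ 0)
    (hcomm : ⁅v (Pi.single 0 1), v (Pi.single 1 1)⁆ = ∑ g, c g • u g)
    (hgen : Algebra.adjoin ℂ (Set.range u ∪ Set.range v) = ⊤)
    (hbrick : ∀ a, (∀ b, Commute (ρ b) a) → a ∈ Submodule.span ℂ {(1 : Module.End ℂ Y)})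
    {d : A →ₗ[ℂ] Module.End ℂ Y} (hd : d ∈ derivationsAlong ρ) (hdu : ∀ g, d (u g) = 0) :
    ∃ a, commutatorMap ρ.toLinearMap a = d := by
  let : Invertible (Fintype.card G : ℂ) := invertibleOfNonzero (by simp)
  set σ := restrictRep ρ u
  set ξ := ρ.toLinearMap ∘ₗ v
  have lie_ξ : ⁅ξ (Pi.single 0 1), ξ (Pi.single 1 1)⁆ = ∑ g, c g • σ g := by
    simpa [ξ, σ, Ring.lie_def] using congrArg ρ hcomm
  have lie_ξ_commute : ∀ a ∈ (σ.linHom σ).invariants,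
      Commute ⁅ξ (Pi.single 0 1), ξ (Pi.single 1 1)⁆ a := fun a ha => lie_ξ ▸
    Commute.sum_left _ _ _ fun g _ => (mem_invariants_linHom_self_iff.mp ha g).smul_left (c g)
  have deriv_eq_zero : commutatorDeriv ξ (d ∘ₗ v) = 0 := by
    refine (derivation_lie hd _ _).symm.trans ?_
    simp [hcomm, hdu]
  have finrank_lt : Module.finrank ℂ (τ.linHom (σ.linHom σ)).invariants <
      2 * Module.finrank ℂ (σ.linHom σ).invariants := by
    obtain ⟨g, hg, hχ⟩ := exists_ne_one_character_ne_zero hc lie_ξ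
    simpa using finrank_invariants_linHom_lt τ σ ⟨g, mt (map_eq_one_iff τ hτ').mp hg, hχ⟩
  have scalar : ∀ a ∈ (σ.linHom σ).invariants, (∀ x, Commute (ξ x) a) →
      a ∈ Submodule.span ℂ {(1 : Module.End ℂ Y)} := fun a ha hξa =>
    hbrick a <| commute_of_forall_mem_commute hgen <| by
      rintro _ (⟨g, rfl⟩ | ⟨x, rfl⟩)
      exacts [mem_invariants_linHom_self_iff.mp ha g, hξa x]
  obtain ⟨a, ha, ha_eq⟩ := exists_commutatorMap_eq_of_commutatorDeriv_eq_zero hτ finrank_lt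
    (toLinearMap_comp_mem_invariants huv) lie_ξ_commute scalar
    (derivation_comp_mem_invariants huv hd hdu) deriv_eq_zero
  refine ⟨a, sub_eq_zero.mp <| eq_zero_of_mem_derivationsAlong
    (sub_mem (commutatorMap_mem_derivationsAlong ρ a) hd) hgen ?_⟩
  rintro _ (⟨g, rfl⟩ | ⟨x, rfl⟩)
  · simpa [σ, hdu] using (mem_invariants_linHom_self_iff.mp ha g).lie_eq
  · exact sub_eq_zero.mpr (LinearMap.congr_fun ha_eq x)

theorem derivationsAlong_le_range_commutatorMap [Nontrivial Y]
    (hτ : ∀ g, LinearMap.det (τ g) = 1) (hτ' : Function.Injective τ)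
    (huv : ∀ g x, v (τ g x) * u g = u g * v x) (hc : c 1 ≠ 0)
    (hcomm : ⁅v (Pi.single 0 1), v (Pi.single 1 1)⁆ = ∑ g, c g • u g)
    (hgen : Algebra.adjoin ℂ (Set.range u ∪ Set.range v) = ⊤)
    (hbrick : ∀ a, (∀ b, Commute (ρ b) a) → a ∈ Submodule.span ℂ {(1 : Module.End ℂ Y)}) :
    derivationsAlong ρ ≤ LinearMap.range (commutatorMap ρ.toLinearMap) := by
  intro d hd
  let : Invertible (Fintype.card G : ℂ) := invertibleOfNonzero (by simp)
  obtain ⟨a, hda⟩ := exists_sub_commutatorMap_apply_eq_zero u hd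
  obtain ⟨b, hb⟩ := exists_commutatorMap_eq_of_apply_eq_zero hτ hτ' huv hc hcomm hgen hbrick
    (sub_mem hd (commutatorMap_mem_derivationsAlong ρ a)) hda
  exact ⟨a + b, by rw [map_add, hb, add_sub_cancel]⟩

end SymplecticPair

section TautologicalRepresentation

variable {n R : Type*} [Fintype n] [DecidableEq n] [CommRing R]
  {Γ : Subgroup (Matrix.SpecialLinearGroup n R)}

variable (Γ) in
/-- The tautological representation on `Rⁿ` of a subgroup of `SLₙ(R)`. -/
def tautologicalRep : Representation R Γ (n → R) where
  toFun γ := Matrix.toLin' γ.1.1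
  map_one' := Matrix.toLin'_one
  map_mul' γ δ := Matrix.toLin'_mul γ.1.1 δ.1.1

theorem tautologicalRep_apply (γ : Γ) : tautologicalRep Γ γ = Matrix.toLin' γ.1.1 :=
  rfl

theorem det_tautologicalRep (γ : Γ) : LinearMap.det (tautologicalRep Γ γ) = 1 := by
  rw [tautologicalRep_apply, LinearMap.det_toLin', γ.1.2]

theorem tautologicalRep_injective : Function.Injective (tautologicalRep Γ) := fun _ _ h =>
  Subtype.ext <| Subtype.ext <| Matrix.toLin'.injective h

end TautologicalRepresentation

section RankOneAlgebra

variable {Γ : Subgroup SL2} [Fintype Γ] [DecidableEq Γ] {c : Γ → ℂ}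

variable (Γ c) in
/-- The canonical homomorphism from `Γ` to `H_{1,c}(Γ)`. -/
def groupHom : Γ →* Hone Γ c where
  toFun := oneG Γ c
  map_one' := (RingQuot.mkAlgHom_rel ℂ .grp_one).trans (map_one _)
  map_mul' γ δ := ((map_mul _ _ _).symm.trans (RingQuot.mkAlgHom_rel ℂ (.grp_mul γ δ))).symm

variable (Γ c) in
/-- The canonical map from `L = ℂ²`, spanned by `x` and `y`, to `H_{1,c}(Γ)`. -/
def vectorMap : (Fin 2 → ℂ) →ₗ[ℂ] Hone Γ c :=
  Fintype.linearCombination ℂ (oneX Γ c)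

theorem vectorMap_single (p : Fin 2) : vectorMap Γ c (Pi.single p 1) = oneX Γ c p := by
  simp [vectorMap, Fintype.linearCombination_apply_single]

theorem mkAlgHom_bV (w : Fin 2 → ℂ) :
    RingQuot.mkAlgHom ℂ (BRel Γ c) (bV Γ w) = vectorMap Γ c w := by
  simp [bV, vectorMap, Fintype.linearCombination_apply, oneX]

theorem vectorMap_tautologicalRep_mul_groupHom (γ : Γ) (w : Fin 2 → ℂ) :
    vectorMap Γ c (tautologicalRep Γ γ w) * groupHom Γ c γ =
      groupHom Γ c γ * vectorMap Γ c w := by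
  have conj : groupHom Γ c γ * vectorMap Γ c w * groupHom Γ c γ⁻¹ =
      vectorMap Γ c (tautologicalRep Γ γ w) := by
    have rel := RingQuot.mkAlgHom_rel ℂ (BRel.grp_conj (c := c) γ w)
    simp only [map_mul, mkAlgHom_bV] at rel
    exact rel
  rw [← conj, mul_assoc, ← map_mul, inv_mul_cancel, map_one, mul_one]

theorem lie_vectorMap :
    ⁅vectorMap Γ c (Pi.single 0 1), vectorMap Γ c (Pi.single 1 1)⁆ =
      ∑ γ, Function.update c 1 1 γ • groupHom Γ c γ := by
  have comm : ⁅oneX Γ c 0, oneX Γ c 1⁆ = 1 + ∑ γ with γ ≠ 1, c γ • groupHom Γ c γ := by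
    have rel := RingQuot.mkAlgHom_rel ℂ (BRel.comm (c := c))
    simp only [map_sub, map_mul, map_add, map_one, map_sum, map_smul] at rel
    exact rel
  rw [vectorMap_single, vectorMap_single, comm, Finset.filter_ne',
    ← Finset.add_sum_erase _ _ (Finset.mem_univ (1 : Γ)), Function.update_self, one_smul, map_one]
  congr 1
  refine Finset.sum_congr rfl fun γ hγ => ?_
  rw [Function.update_of_ne (Finset.ne_of_mem_erase hγ)]

theorem adjoin_range_groupHom_union_range_vectorMap :
    Algebra.adjoin ℂ (Set.range (groupHom Γ c) ∪ Set.range (vectorMap Γ c)) = ⊤ := by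
  have map_eq_top : (Algebra.adjoin ℂ (Set.range (FreeAlgebra.ι ℂ))).map
      (RingQuot.mkAlgHom ℂ (BRel Γ c)) = ⊤ := by
    rw [FreeAlgebra.adjoin_range_ι, Algebra.map_top, AlgHom.range_eq_top]
    exact RingQuot.mkAlgHom_surjective ℂ _
  rw [eq_top_iff, ← map_eq_top, AlgHom.map_adjoin]
  refine Algebra.adjoin_mono ?_
  rintro _ ⟨_, ⟨γ | p, rfl⟩, rfl⟩
  · exact .inl ⟨γ, rfl⟩
  · exact .inr ⟨Pi.single p 1, vectorMap_single p⟩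

end RankOneAlgebra

theorem stmt_14_general (Γ : Subgroup SL2) [Fintype Γ] [DecidableEq Γ] (c : Γ → ℂ)
    (Y : Type) [AddCommGroup Y] [Module ℂ Y] [FiniteDimensional ℂ Y] [Nontrivial Y]
    (ρ : Hone Γ c →ₐ[ℂ] Module.End ℂ Y)
    (hbrick : ∀ a : Module.End ℂ Y, (∀ b, Commute (ρ b) a) → a ∈ Submodule.span ℂ {1}) :
    Zc (bimodEnd ρ) 1 ≤ Bc (bimodEnd ρ) 0 :=
  Zc_one_le_Bc_zero <| derivationsAlong_le_range_commutatorMap det_tautologicalRep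
    tautologicalRep_injective vectorMap_tautologicalRep_mul_groupHom (by simp) lie_vectorMap
    adjoin_range_groupHom_union_range_vectorMap hbrick

/-- for `B = H_{1,c}(Γ)` and a finite dimensional irreducible `B`-module
`Y`, one has `Ext¹_B(Y, Y) = 0`, i.e. the Hochschild cohomology `H¹(B, End_ℂ Y)`
vanishes (every 1-cocycle is a coboundary), where `End_ℂ Y` is a `B`-bimodule via
`ρ : B → End_ℂ Y`. -/
theorem stmt_14 (Γ : Subgroup SL2) [Fintype Γ] [DecidableEq Γ] (c : Γ → ℂ)
    (Y : Type) [AddCommGroup Y] [Module ℂ Y] [FiniteDimensional ℂ Y] [Nontrivial Y]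
    (ρ : Hone Γ c →ₐ[ℂ] Module.End ℂ Y)
    (hirr : ∀ U : Submodule ℂ Y, (∀ b : Hone Γ c, U.map (ρ b) ≤ U) → U = ⊥ ∨ U = ⊤) :
    Zc (bimodEnd ρ) 1 ≤ Bc (bimodEnd ρ) 0 :=
  stmt_14_general Γ c Y ρ fun _ => mem_span_one_of_forall_commute hirr
end

section
/- Let A = H_{1,0,c}(Γ_N) (the parameter k equal to 0), B = H_{1,c}(Γ), Y a finite-dimensional irreducible B-module, and W a finite-dimensional irreducible representation of S_N satisfying Hom_{S_N}(𝔥 ⊗ W, W) = 0 (as holds exactly when the Young diagram of W is a rectangle), where 𝔥 is the reflection representation of S_N. Let M = W ⊗ Y^{⊗N} be the A-module described in the context. Then the Hochschild cohomology H¹(A, End_ℂ M) vanishes; equivalently Ext¹_A(M, M) = 0. -/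
open scoped TensorProduct

noncomputable section

/-- The permutation action of `S_N` on `Γ^N`, `(σ • f) i = f (σ⁻¹ i)`. -/
def wphi (Γ : Type) [Group Γ] (N : ℕ) : Equiv.Perm (Fin N) →* MulAut (Fin N → Γ) where
  toFun σ := MulEquiv.arrowCongr σ (MulEquiv.refl Γ)
  map_one' := rfl
  map_mul' _ _ := rfl

/-- The wreath product `Γ_N = S_N ⋉ Γ^N`. -/
abbrev WP (Γ : Type) [Group Γ] (N : ℕ) : Type :=
  (Fin N → Γ) ⋊[wphi Γ N] Equiv.Perm (Fin N)

/-- `γ_i`: the element `γ ∈ Γ` placed in the `i`-th factor of `Γ^N ⊂ Γ_N`. -/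
def tG {Γ : Type} [Group Γ] {N : ℕ} (i : Fin N) (γ : Γ) : WP Γ N :=
  SemidirectProduct.inl (Pi.mulSingle i γ)

/-- The symplectic reflection `s_{ij} γ_i γ_j⁻¹` of type (S). -/
def tS {Γ : Type} [Group Γ] {N : ℕ} (i j : Fin N) (γ : Γ) : WP Γ N :=
  SemidirectProduct.inr (Equiv.swap i j) * tG i γ * (tG j γ)⁻¹

/-- The linear action of the wreath product `Γ_N` (for `Γ ⊂ SL(2,ℂ)`) on `V = L^{⊕N}`,
`(g · v) i = g.left i • v (g.right⁻¹ i)`. -/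
def actL (Γ : Subgroup SL2) (N : ℕ) (g : WP Γ N) :
    (Fin N → Fin 2 → ℂ) →ₗ[ℂ] Fin N → Fin 2 → ℂ :=
  LinearMap.pi fun i =>
    (Matrix.mulVecLin ((g.left i : SL2) : Matrix (Fin 2) (Fin 2) ℂ)).comp
      (LinearMap.proj (g.right⁻¹ i))

section HNalg

variable (Γ : Subgroup SL2) [Fintype Γ] [DecidableEq Γ] (N : ℕ)

/-- Generator `g ∈ Γ_N` in the free algebra on `Γ_N ⊕ {x_i, y_i}`. -/
def nG (g : WP Γ N) : FreeAlgebra ℂ (WP Γ N ⊕ Fin N × Fin 2) :=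
  FreeAlgebra.ι ℂ (Sum.inl g)

/-- Generator `x_i` (for `p = 0`) resp. `y_i` (for `p = 1`) in the free algebra. -/
def nX (i : Fin N) (p : Fin 2) : FreeAlgebra ℂ (WP Γ N ⊕ Fin N × Fin 2) :=
  FreeAlgebra.ι ℂ (Sum.inr (i, p))

/-- The general vector `v ∈ V = L^{⊕N}` inside the free algebra. -/
def nV (v : Fin N → Fin 2 → ℂ) : FreeAlgebra ℂ (WP Γ N ⊕ Fin N × Fin 2) :=
  ∑ i : Fin N, ∑ p : Fin 2, v i p • nX Γ N i p

/-- The standard symplectic form `ω_L` on `L = ℂ²`: `ω_L(u,v) = u₀ v₁ - u₁ v₀`. -/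
def omL (u v : Fin 2 → ℂ) : ℂ := u 0 * v 1 - u 1 * v 0

/-- The defining relations of the wreath product symplectic reflection algebra
`H_{1,k,c}(Γ_N)`:  the group relations of `Γ_N`, the relations `g v g⁻¹ = g(v)` for
`v ∈ V`, and the relations (R1), (R2) of Gan–Ginzburg. -/
inductive HRel (k : ℂ) (c : Γ → ℂ) :
    FreeAlgebra ℂ (WP Γ N ⊕ Fin N × Fin 2) → FreeAlgebra ℂ (WP Γ N ⊕ Fin N × Fin 2) → Prop
  | grp_mul (g h : WP Γ N) : HRel k c (nG Γ N g * nG Γ N h) (nG Γ N (g * h))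
  | grp_one : HRel k c (nG Γ N 1) 1
  | grp_conj (g : WP Γ N) (v : Fin N → Fin 2 → ℂ) :
      HRel k c (nG Γ N g * nV Γ N v * nG Γ N g⁻¹) (nV Γ N (actL Γ N g v))
  | r1 (i : Fin N) :
      HRel k c (nX Γ N i 0 * nX Γ N i 1 - nX Γ N i 1 * nX Γ N i 0)
        (1 + (k / 2) • ∑ j ∈ Finset.univ.filter (fun j : Fin N => j ≠ i),
            ∑ γ : Γ, nG Γ N (tS i j γ)
          + ∑ γ ∈ Finset.univ.filter (fun γ : Γ => γ ≠ 1), c γ • nG Γ N (tG i γ))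
  | r2 (i j : Fin N) (hij : i ≠ j) (u v : Fin 2 → ℂ) :
      HRel k c (nV Γ N (Pi.single i u) * nV Γ N (Pi.single j v)
          - nV Γ N (Pi.single j v) * nV Γ N (Pi.single i u))
        ((-(k / 2)) • ∑ γ : Γ,
          omL (Matrix.mulVec ((γ : SL2) : Matrix (Fin 2) (Fin 2) ℂ) u) v • nG Γ N (tS i j γ))

/-- The wreath product symplectic reflection algebra `H_{1,k,c}(Γ_N)`. -/
abbrev HN (k : ℂ) (c : Γ → ℂ) : Type := RingQuot (HRel Γ N k c)

/-- The image of the group element `g ∈ Γ_N` in `H_{1,k,c}(Γ_N)`. -/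
def hG (k : ℂ) (c : Γ → ℂ) (g : WP Γ N) : HN Γ N k c :=
  RingQuot.mkAlgHom ℂ (HRel Γ N k c) (nG Γ N g)

/-- The image of `x_i` (`p = 0`) resp. `y_i` (`p = 1`) in `H_{1,k,c}(Γ_N)`. -/
def hX (k : ℂ) (c : Γ → ℂ) (i : Fin N) (p : Fin 2) : HN Γ N k c :=
  RingQuot.mkAlgHom ℂ (HRel Γ N k c) (nX Γ N i p)
end HNalg


variable {A : Type} [Ring A] [Algebra ℂ A] {E : Type} [AddCommGroup E] [Module ℂ E]

/-- The sum-of-coordinates functional on `ℂ^N`. -/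
def sumFun (N : ℕ) : (Fin N → ℂ) →ₗ[ℂ] ℂ where
  toFun v := ∑ i, v i
  map_add' u v := by simp [Finset.sum_add_distrib]
  map_smul' z v := by simp [Finset.mul_sum]

/-- The reflection representation `𝔥 = {v ∈ ℂ^N : ∑ vᵢ = 0}` of `S_N`. -/
def hplane (N : ℕ) : Submodule ℂ (Fin N → ℂ) := LinearMap.ker (sumFun N)

/-- The permutation action of `S_N` on `𝔥`. -/
def permH {N : ℕ} (σ : Equiv.Perm (Fin N)) (v : hplane N) : hplane N :=
  ⟨fun i => (v : Fin N → ℂ) (σ⁻¹ i), by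
    have hv : sumFun N (v : Fin N → ℂ) = 0 := v.2
    simp only [sumFun, LinearMap.coe_mk, AddHom.coe_mk] at hv
    simp only [hplane, LinearMap.mem_ker, sumFun, LinearMap.coe_mk, AddHom.coe_mk]
    rw [Equiv.sum_comp σ⁻¹ (v : Fin N → ℂ)]
    exact hv⟩
end

/-!
At `k = 0` the algebra `A` is generated by `N` commuting copies of `B = H_{1,c}(Γ)` and by `S_N`,
which permutes them, and Hochschild 1-cocycles are derivations `A → End M` along the action map;
they have to be shown inner.

For `B` itself this is `Ext¹_B(Y, Y) = 0`. A derivation can be averaged so that it vanishes on `Γ`;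
it is then a cocycle in the middle of the complex `E^Γ → (L* ⊗ E)^Γ → E^Γ`, where `E = End Y`.
Pairing the determinant on `L` with the trace on `E` makes this complex self-dual, with a
symplectic form on the middle term, in which the image of the first map is isotropic of dimension
`dim E^Γ - 1` by Schur's lemma. Now `2 dim E^Γ - dim (L* ⊗ E)^Γ = |Γ|⁻¹ ∑_γ (2 - tr γ) |χ_Y(γ)|²`
is positive: taking traces in `xy - yx = λ(c)` shows `χ_Y(γ) ≠ 0` for some `γ ≠ 1`. Since
symplectic spaces have even dimension, the image is Lagrangian, that is, equal to the space of
cocycles.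

The `i`-th copy of `B` acts on `M` through a matrix algebra `End Y`, so a derivation on it is
implemented by an element built from its own values, which commutes with everything the other copies
see. This allows the copies to be corrected one after another, and averaging over `S_N` finishes.
-/

noncomputable section

namespace SymplecticReflection

/-! ### Derivations along an algebra homomorphism -/

section Derivations

variable {R A E : Type*} [CommRing R] [Ring A] [Algebra R A] [Ring E] [Algebra R E]

/-- The derivations of `A` with values in `E`, seen as an `A`-bimodule through `ρ : A → E`.
These are the Hochschild 1-cocycles of `A` in `E`. -/
def derivationsAlong (ρ : A →ₐ[R] E) : Submodule R (A →ₗ[R] E) where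
  carrier := {d | ∀ a b, d (a * b) = ρ a * d b + d a * ρ b}
  zero_mem' a b := by simp
  add_mem' {d d'} hd hd' a b := by
    simp only [LinearMap.add_apply, hd a b, hd' a b, mul_add, add_mul]
    abel
  smul_mem' z d hd a b := by
    simp only [LinearMap.smul_apply, hd a b, smul_add, mul_smul_comm, smul_mul_assoc]

/-- The inner derivation `a ↦ T * ρ a - ρ a * T` along `ρ` attached to `T`; inner derivations
are, up to sign, the Hochschild 1-coboundaries. -/
def innerDerivation (ρ : A →ₐ[R] E) : E →ₗ[R] A →ₗ[R] E :=
  LinearMap.mk₂ R (fun T a => T * ρ a - ρ a * T)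
    (fun _ _ _ => by simp only [add_mul, mul_add]; abel)
    (fun _ _ _ => by simp only [smul_mul_assoc, mul_smul_comm, smul_sub])
    (fun _ _ _ => by simp only [map_add, add_mul, mul_add]; abel)
    (fun _ _ _ => by simp only [map_smul, smul_mul_assoc, mul_smul_comm, smul_sub])

lemma innerDerivation_apply (ρ : A →ₐ[R] E) (T : E) (a : A) :
    innerDerivation ρ T a = T * ρ a - ρ a * T := rfl

lemma innerDerivation_mem_derivationsAlong (ρ : A →ₐ[R] E) (T : E) :
    innerDerivation ρ T ∈ derivationsAlong ρ := fun a b => by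
  simp only [innerDerivation_apply, map_mul]
  noncomm_ring

variable {ρ : A →ₐ[R] E} {d : A →ₗ[R] E}

lemma apply_one_eq_zero_of_mem_derivationsAlong (hd : d ∈ derivationsAlong ρ) : d 1 = 0 := by
  simpa using hd 1 1

lemma comp_mem_derivationsAlong {B : Type*} [Ring B] [Algebra R B]
    (hd : d ∈ derivationsAlong ρ) (ι : B →ₐ[R] A) :
    d ∘ₗ ι.toLinearMap ∈ derivationsAlong (ρ.comp ι) := fun a b => by
  simp [hd (ι a) (ι b)]

lemma toLinearMap_comp_mem_derivationsAlong {F : Type*} [Ring F] [Algebra R F]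
    (hd : d ∈ derivationsAlong ρ) (f : E →ₐ[R] F) :
    f.toLinearMap ∘ₗ d ∈ derivationsAlong (f.comp ρ) := fun a b => by
  simp [hd a b]

lemma eq_innerDerivation_of_adjoin_eq_top {S : Set A} (hS : Algebra.adjoin R S = ⊤)
    (hd : d ∈ derivationsAlong ρ) {T : E} (hT : ∀ s ∈ S, d s = innerDerivation ρ T s) :
    d = innerDerivation ρ T := by
  have hdiff : d - innerDerivation ρ T ∈ derivationsAlong ρ :=
    sub_mem hd (innerDerivation_mem_derivationsAlong ρ T)
  ext a
  rw [← sub_eq_zero, ← LinearMap.sub_apply]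
  have ha : a ∈ Algebra.adjoin R S := hS ▸ Algebra.mem_top
  induction ha using Algebra.adjoin_induction with
  | mem s hs => rw [LinearMap.sub_apply, hT s hs, sub_self]
  | algebraMap r =>
    rw [Algebra.algebraMap_eq_smul_one, map_smul,
      apply_one_eq_zero_of_mem_derivationsAlong hdiff, smul_zero]
  | add a b _ _ ha hb => rw [map_add, ha, hb, add_zero]
  | mul a b _ _ ha hb => rw [hdiff a b, ha, hb, mul_zero, zero_mul, add_zero]

section Averaging

variable {G : Type*} [Group G] [Fintype G]

/-- The average of `d (e k) * ρ (e k)⁻¹` over a finite group mapping to `A`: the element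
implementing the derivation `d` on that group. -/
def averagedImplementer (ρ : A →ₐ[R] E) (e : G →* A) (d : A →ₗ[R] E)
    [Invertible (Fintype.card G : R)] : E :=
  ⅟(Fintype.card G : R) • ∑ k, d (e k) * ρ (e k⁻¹)

variable [Invertible (Fintype.card G : R)]

lemma apply_group_eq_innerDerivation_averagedImplementer (hd : d ∈ derivationsAlong ρ)
    (e : G →* A) (g : G) : d (e g) = innerDerivation ρ (averagedImplementer ρ e d) (e g) := by
  have hterm (k : G) : d (e (g * k)) * ρ (e (g * k)⁻¹) * ρ (e g) =
      ρ (e g) * (d (e k) * ρ (e k⁻¹)) + d (e g) := by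
    have hinv : ρ (e k) * ρ (e k⁻¹) = 1 := by simp [← map_mul]
    have hmul : ρ (e (g * k)⁻¹) * ρ (e g) = ρ (e k⁻¹) := by simp [← map_mul]
    rw [mul_assoc, hmul, map_mul, hd, add_mul, mul_assoc, mul_assoc (d (e g)), hinv, mul_one]
  have hsum : (∑ k, d (e k) * ρ (e k⁻¹)) * ρ (e g) =
      ρ (e g) * (∑ k, d (e k) * ρ (e k⁻¹)) + (Fintype.card G : R) • d (e g) := by
    calc (∑ k, d (e k) * ρ (e k⁻¹)) * ρ (e g)
        = ∑ k, d (e (g * k)) * ρ (e (g * k)⁻¹) * ρ (e g) := by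
          rw [← Equiv.sum_comp (Equiv.mulLeft g), Finset.sum_mul]; rfl
      _ = _ := by
          simp only [hterm, Finset.sum_add_distrib, Finset.mul_sum, Finset.sum_const,
            Finset.card_univ, Nat.cast_smul_eq_nsmul]
  rw [innerDerivation_apply, averagedImplementer, smul_mul_assoc, hsum, mul_smul_comm, smul_add,
    smul_smul, invOf_mul_self, one_smul, add_sub_cancel_left]

lemma innerDerivation_averagedImplementer_eq_zero (hd : d ∈ derivationsAlong ρ) (e : G →* A)
    {S : Set A} (hS : ∀ g, ∀ s ∈ S, e g * s * e g⁻¹ ∈ S) (hdS : ∀ s ∈ S, d s = 0)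
    {s : A} (hs : s ∈ S) : innerDerivation ρ (averagedImplementer ρ e d) s = 0 := by
  have hterm (k : G) : d (e k) * ρ (e k⁻¹) * ρ s = ρ s * (d (e k) * ρ (e k⁻¹)) := by
    set t := e k⁻¹ * s * e k with ht
    have hdt : d t = 0 := hdS t (by simpa using hS k⁻¹ s hs)
    have hkt : e k * t = s * e k := by simp [ht, ← mul_assoc, ← map_mul]
    have htk : t * e k⁻¹ = e k⁻¹ * s := by simp [ht, mul_assoc, ← map_mul]
    have hcomm : d (e k) * ρ t = ρ s * d (e k) := by
      simpa [hd (e k) t, hd s (e k), hdt, hdS s hs] using congrArg d hkt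
    rw [mul_assoc, ← map_mul, ← htk, map_mul, ← mul_assoc, hcomm, mul_assoc]
  simp only [innerDerivation_apply, averagedImplementer, smul_mul_assoc, mul_smul_comm,
    Finset.sum_mul, Finset.mul_sum, hterm, sub_self]

end Averaging

lemma commute_of_mem_adjoin_derivation {B C : Type*} [Ring B] [Algebra R B] [Ring C] [Algebra R C]
    {ι : B →ₐ[R] A} {κ : C →ₐ[R] A} (hcomm : ∀ b c, Commute (ι b) (κ c))
    (hd : d ∈ derivationsAlong ρ) (hdκ : ∀ c, d (κ c) = 0) {T : E}
    (hT : T ∈ Algebra.adjoin R (Set.range (d ∘ₗ ι.toLinearMap) ∪ Set.range (ρ.comp ι))) (c : C) :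
    Commute T (ρ (κ c)) := by
  induction hT using Algebra.adjoin_induction with
  | mem t ht =>
    obtain ⟨b, rfl⟩ | ⟨b, rfl⟩ := ht
    · have hdcomm := congrArg d (hcomm b c).eq
      rwa [hd, hd, hdκ, mul_zero, zero_add, zero_mul, add_zero] at hdcomm
    · exact (hcomm b c).map ρ
  | algebraMap r => exact Algebra.commute_algebraMap_left r _
  | add _ _ _ _ hs ht => exact hs.add_left ht
  | mul _ _ _ _ hs ht => exact hs.mul_left ht

/-- Implementers of `d` on the individual subalgebras can be added up: membership in `adjoin` makes
each of them commute with the subalgebras already treated. -/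
lemma exists_forall_apply_eq_innerDerivation {I : Type*} [Finite I] {B : I → Type*}
    [∀ i, Ring (B i)] [∀ i, Algebra R (B i)] (ι : ∀ i, B i →ₐ[R] A)
    (hcomm : ∀ i j, i ≠ j → ∀ b c, Commute (ι i b) (ι j c))
    (hinner : ∀ i, ∀ δ ∈ derivationsAlong (ρ.comp (ι i)),
      ∃ T ∈ Algebra.adjoin R (Set.range δ ∪ Set.range (ρ.comp (ι i))),
        δ = innerDerivation (ρ.comp (ι i)) T)
    (hd : d ∈ derivationsAlong ρ) :
    ∃ T, ∀ i b, d (ι i b) = innerDerivation ρ T (ι i b) := by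
  classical
  have := Fintype.ofFinite I
  suffices h : ∀ s : Finset I, ∃ T, ∀ i ∈ s, ∀ b, d (ι i b) = innerDerivation ρ T (ι i b) by
    obtain ⟨T, hT⟩ := h Finset.univ
    exact ⟨T, fun i => hT i (Finset.mem_univ i)⟩
  intro s
  induction s using Finset.induction_on with
  | empty => exact ⟨0, by simp⟩
  | insert j s hj ih =>
    obtain ⟨T, hT⟩ := ih
    have hd' : d - innerDerivation ρ T ∈ derivationsAlong ρ :=
      sub_mem hd (innerDerivation_mem_derivationsAlong ρ T)
    obtain ⟨T', hT'mem, hT'⟩ := hinner j _ (comp_mem_derivationsAlong hd' (ι j))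
    refine ⟨T + T', fun i hi b => ?_⟩
    rw [map_add, LinearMap.add_apply, ← sub_eq_iff_eq_add']
    obtain rfl | his := Finset.mem_insert.mp hi
    · exact LinearMap.congr_fun hT' b
    · have hTT' : Commute T' (ρ (ι i b)) :=
        commute_of_mem_adjoin_derivation (hcomm j i (ne_of_mem_of_not_mem his hj).symm) hd'
          (fun c => by rw [LinearMap.sub_apply, hT i his c, sub_self]) hT'mem b
      rw [hT i his b, sub_self, innerDerivation_apply ρ T', hTT'.eq, sub_self]

lemma derivationsAlong_le_range_of_permuted_commuting_family {I B G : Type*} [Finite I] [Ring B]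
    [Algebra R B] [Group G] [MulAction G I] [Fintype G] [Invertible (Fintype.card G : R)]
    (ι : I → B →ₐ[R] A) (hcomm : ∀ i j, i ≠ j → ∀ b c, Commute (ι i b) (ι j c))
    (e : G →* A) (hperm : ∀ g i b, e g * ι i b * e g⁻¹ = ι (g • i) b)
    (hgen : Algebra.adjoin R ((⋃ i, Set.range (ι i)) ∪ Set.range e) = ⊤)
    (hinner : ∀ i, ∀ δ ∈ derivationsAlong (ρ.comp (ι i)),
      ∃ T ∈ Algebra.adjoin R (Set.range δ ∪ Set.range (ρ.comp (ι i))),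
        δ = innerDerivation (ρ.comp (ι i)) T) :
    derivationsAlong ρ ≤ LinearMap.range (innerDerivation ρ) := by
  intro d hd
  obtain ⟨T, hT⟩ := exists_forall_apply_eq_innerDerivation ι hcomm hinner hd
  set d' := d - innerDerivation ρ T with hd'def
  have hd' : d' ∈ derivationsAlong ρ := sub_mem hd (innerDerivation_mem_derivationsAlong ρ T)
  have hd'ι : ∀ s ∈ ⋃ i, Set.range (ι i), d' s = 0 := by
    simp only [Set.mem_iUnion, Set.mem_range]
    rintro _ ⟨i, b, rfl⟩
    rw [hd'def, LinearMap.sub_apply, hT, sub_self]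
  have hstable : ∀ g, ∀ s ∈ ⋃ i, Set.range (ι i), e g * s * e g⁻¹ ∈ ⋃ i, Set.range (ι i) := by
    simp only [Set.mem_iUnion, Set.mem_range]
    rintro g _ ⟨i, b, rfl⟩
    exact ⟨g • i, b, (hperm g i b).symm⟩
  have hd'inner : d' = innerDerivation ρ (averagedImplementer ρ e d') := by
    refine eq_innerDerivation_of_adjoin_eq_top hgen hd' ?_
    rintro s (hs | ⟨g, rfl⟩)
    · rw [hd'ι s hs, innerDerivation_averagedImplementer_eq_zero hd' e hstable hd'ι hs]
    · exact apply_group_eq_innerDerivation_averagedImplementer hd' e g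
  exact ⟨T + averagedImplementer ρ e d', by rw [map_add, ← hd'inner, hd'def, add_sub_cancel]⟩

end Derivations

/-! ### Derivations through a matrix algebra -/

section MatrixAlgebra

open Matrix (single)

variable {n : Type*} [Fintype n] [DecidableEq n]

lemma single_one_mul_eq_sum {R : Type*} [CommRing R] (o p : n) (a : Matrix n n R) :
    single o p 1 * a = ∑ r, a p r • single o r 1 := by
  ext s t
  by_cases h : s = o
  · subst h; simp [Matrix.sum_apply, Matrix.single_apply]
  · simp [Matrix.sum_apply, h, Ne.symm h]

lemma mul_single_one_eq_sum {R : Type*} [CommRing R] (o q : n) (a : Matrix n n R) :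
    a * single q o 1 = ∑ r, a r q • single r o 1 := by
  ext s t
  by_cases h : t = o
  · subst h; simp [Matrix.sum_apply, Matrix.single_apply]
  · simp [Matrix.sum_apply, h, Ne.symm h]

lemma sum_map_single_mul_map_single {R E : Type*} [CommRing R] [Ring E] [Algebra R E]
    (j : Matrix n n R →ₐ[R] E) (o : n) : ∑ k, j (single k o 1) * j (single o k 1) = 1 := by
  simp [← map_mul, ← map_sum, Matrix.sum_single_one]

lemma exists_mem_adjoin_eq_innerDerivation_of_matrix {R E : Type*} [CommRing R] [Ring E]
    [Algebra R E] {j : Matrix n n R →ₐ[R] E} {d : Matrix n n R →ₗ[R] E}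
    (hd : d ∈ derivationsAlong j) (o : n) :
    ∃ T ∈ Algebra.adjoin R (Set.range d ∪ Set.range j), d = innerDerivation j T := by
  set T : E := ∑ k, d (single k o 1) * j (single o k 1) with hT
  have hsep (x : Matrix n n R) :
      ∑ k, d (x * single k o 1) * j (single o k 1) = T * j x := by
    simp only [hT, Finset.sum_mul, mul_assoc, ← map_mul, single_one_mul_eq_sum,
      mul_single_one_eq_sum, map_sum, map_smul, smul_mul_assoc, Finset.mul_sum, mul_smul_comm]
    exact Finset.sum_comm
  refine ⟨T, ?_, LinearMap.ext fun x => ?_⟩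
  · exact sum_mem fun k _ => mul_mem (Algebra.subset_adjoin (.inl ⟨_, rfl⟩))
      (Algebra.subset_adjoin (.inr ⟨_, rfl⟩))
  · rw [innerDerivation_apply, ← hsep x]
    simp only [hd x, add_mul, Finset.sum_add_distrib, mul_assoc, ← Finset.mul_sum,
      sum_map_single_mul_map_single, mul_one, ← hT, add_sub_cancel_left]

variable {K E : Type*} [Field K] [Ring E] [Algebra K E]

/-- The matrix of values of a functional `η` on the Peirce components `j (e_op) * x * j (e_qo)` of
`x`. It is a bimodule map over the matrix algebra. -/
def peirceMatrix (j : Matrix n n K →ₐ[K] E) (o : n) (η : Module.Dual K E) :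
    E →ₗ[K] Matrix n n K where
  toFun x := Matrix.of fun p q => η (j (single o p 1) * x * j (single q o 1))
  map_add' x y := by ext; simp [mul_add, add_mul]
  map_smul' z x := by ext; simp

lemma peirceMatrix_apply (j : Matrix n n K →ₐ[K] E) (o : n) (η : Module.Dual K E) (x : E)
    (p q : n) : peirceMatrix j o η x p q = η (j (single o p 1) * x * j (single q o 1)) := rfl

lemma peirceMatrix_left_mul (j : Matrix n n K →ₐ[K] E) (o : n) (η : Module.Dual K E)
    (a : Matrix n n K) (x : E) :
    peirceMatrix j o η (j a * x) = a * peirceMatrix j o η x := by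
  ext p q
  rw [peirceMatrix_apply, ← mul_assoc, ← map_mul, single_one_mul_eq_sum, Matrix.mul_apply]
  simp only [map_sum, map_smul, Finset.sum_mul, smul_mul_assoc, smul_eq_mul, peirceMatrix_apply]

lemma peirceMatrix_right_mul (j : Matrix n n K →ₐ[K] E) (o : n) (η : Module.Dual K E)
    (a : Matrix n n K) (x : E) :
    peirceMatrix j o η (x * j a) = peirceMatrix j o η x * a := by
  ext p q
  rw [peirceMatrix_apply, mul_assoc, mul_assoc, ← map_mul, mul_single_one_eq_sum,
    Matrix.mul_apply]
  simp only [map_sum, map_smul, Finset.mul_sum, mul_smul_comm, smul_eq_mul, peirceMatrix_apply,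
    mul_assoc, mul_comm]

lemma eq_zero_of_peirceMatrix_eq_zero (j : Matrix n n K →ₐ[K] E) (o : n) {x : E}
    (hx : ∀ η, peirceMatrix j o η x = 0) : x = 0 := by
  have hcomponent (p q : n) : j (single o p 1) * x * j (single q o 1) = 0 :=
    (Module.forall_dual_apply_eq_zero_iff K _).mp fun η => congrFun (congrFun (hx η) p) q
  calc x = (∑ p, j (single p o 1) * j (single o p 1)) * x *
        ∑ q, j (single q o 1) * j (single o q 1) := by
          rw [sum_map_single_mul_map_single, one_mul, mul_one]
    _ = ∑ p, ∑ q, j (single p o 1) * (j (single o p 1) * x * j (single q o 1)) *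
        j (single o q 1) := by
          simp only [Finset.sum_mul, mul_assoc]
          simp only [Finset.mul_sum]
    _ = 0 := by simp only [hcomponent, mul_zero, zero_mul, Finset.sum_const_zero]

variable {B : Type*} [Ring B] [Algebra K B]

lemma apply_eq_zero_of_comp_matrix {π : B →ₐ[K] Matrix n n K}
    (hπ : derivationsAlong π ≤ LinearMap.range (innerDerivation π)) {j : Matrix n n K →ₐ[K] E}
    (o : n) {d : B →ₗ[K] E} (hd : d ∈ derivationsAlong (j.comp π)) {b : B} (hb : π b = 0) :
    d b = 0 := by
  refine eq_zero_of_peirceMatrix_eq_zero j o fun η => ?_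
  have hder : peirceMatrix j o η ∘ₗ d ∈ derivationsAlong π := fun a a' => by
    simp only [LinearMap.comp_apply, hd a a', map_add, AlgHom.comp_apply, peirceMatrix_left_mul,
      peirceMatrix_right_mul]
  obtain ⟨T, hT⟩ := hπ hder
  rw [← LinearMap.comp_apply, ← hT, innerDerivation_apply, hb, mul_zero, zero_mul, sub_self]

lemma exists_mem_adjoin_eq_innerDerivation_of_comp_matrix {π : B →ₐ[K] Matrix n n K}
    (hsurj : Function.Surjective π)
    (hπ : derivationsAlong π ≤ LinearMap.range (innerDerivation π)) {j : Matrix n n K →ₐ[K] E}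
    (o : n) {d : B →ₗ[K] E} (hd : d ∈ derivationsAlong (j.comp π)) :
    ∃ T ∈ Algebra.adjoin K (Set.range d ∪ Set.range (j.comp π)),
      d = innerDerivation (j.comp π) T := by
  have hfactor {b b' : B} (h : π b = π b') : d b = d b' := by
    rw [← sub_eq_zero, ← map_sub]
    exact apply_eq_zero_of_comp_matrix hπ o hd (by rw [map_sub, h, sub_self])
  obtain ⟨s, hs⟩ := π.toLinearMap.exists_rightInverse_of_surjective
    (LinearMap.range_eq_top.mpr hsurj)
  have hπs (x : Matrix n n K) : π (s x) = x := LinearMap.congr_fun hs x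
  have hds : d ∘ₗ s ∈ derivationsAlong j := fun x y => by
    have hmul : d (s (x * y)) = d (s x * s y) := hfactor (by simp only [map_mul, hπs])
    simpa only [LinearMap.comp_apply, AlgHom.comp_apply, hπs] using hmul.trans (hd (s x) (s y))
  obtain ⟨T, hTmem, hT⟩ := exists_mem_adjoin_eq_innerDerivation_of_matrix hds o
  refine ⟨T, Algebra.adjoin_mono (Set.union_subset_union ?_ ?_) hTmem, LinearMap.ext fun b => ?_⟩
  · rintro _ ⟨x, rfl⟩
    exact ⟨s x, rfl⟩
  · rintro _ ⟨x, rfl⟩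
    exact ⟨s x, congrArg j (hπs x)⟩
  · calc d b = d (s (π b)) := hfactor (hπs _).symm
      _ = innerDerivation j T (π b) := LinearMap.congr_fun hT (π b)

lemma exists_mem_adjoin_eq_innerDerivation_of_comp_end {Y : Type*} [AddCommGroup Y] [Module K Y]
    [FiniteDimensional K Y] [Nontrivial Y] {π : B →ₐ[K] Module.End K Y}
    (hsurj : Function.Surjective π)
    (hπ : derivationsAlong π ≤ LinearMap.range (innerDerivation π)) (j : Module.End K Y →ₐ[K] E)
    {d : B →ₗ[K] E} (hd : d ∈ derivationsAlong (j.comp π)) :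
    ∃ T ∈ Algebra.adjoin K (Set.range d ∪ Set.range (j.comp π)),
      d = innerDerivation (j.comp π) T := by
  let ε : Module.End K Y ≃ₐ[K] _ := LinearMap.toMatrixAlgEquiv (Module.finBasis K Y)
  let π' := ε.toAlgHom.comp π
  have hj : (j.comp ε.symm.toAlgHom).comp π' = j.comp π := by
    ext b; simp [π']
  have hπ' : derivationsAlong π' ≤ LinearMap.range (innerDerivation π') := fun δ hδ => by
    have hπ'symm : ε.symm.toAlgHom.comp π' = π := by ext1 b; simp [π']
    have hδ' := toLinearMap_comp_mem_derivationsAlong hδ ε.symm.toAlgHom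
    obtain ⟨T, hT⟩ := hπ (hπ'symm ▸ hδ')
    refine ⟨ε T, LinearMap.ext fun b => ε.symm.injective ?_⟩
    simpa [innerDerivation_apply, π'] using LinearMap.congr_fun hT b
  rw [← hj] at hd ⊢
  exact exists_mem_adjoin_eq_innerDerivation_of_comp_matrix (ε.surjective.comp hsurj) hπ'
    ⟨0, Module.finrank_pos⟩ hd

end MatrixAlgebra

/-! ### Characters of finite groups -/

section Characters

open Module (finrank)

lemma isSemisimple_of_pow_eq_one {K V : Type*} [Field K] [AddCommGroup V] [Module K V]
    {f : Module.End K V} {n : ℕ} (hn : (n : K) ≠ 0) (hf : f ^ n = 1) : f.IsSemisimple :=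
  Module.End.isSemisimple_of_squarefree_aeval_eq_zero
    (Polynomial.separable_X_pow_sub_C (1 : K) hn one_ne_zero).squarefree (by simp [hf])

lemma exists_eigenbasis_of_isSemisimple {K V : Type*} [Field K] [IsAlgClosed K] [AddCommGroup V]
    [Module K V] [FiniteDimensional K V] {f : Module.End K V} (hf : f.IsSemisimple) :
    ∃ (b : Module.Basis (Fin (finrank K V)) K V) (μ : Fin (finrank K V) → K),
      ∀ i, f.HasEigenvector (μ i) (b i) := by
  let s : Set V := {v | ∃ μ : K, f v = μ • v}
  have hs : ⊤ ≤ Submodule.span K s := by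
    rw [← hf.iSup_eigenspace_eq_top]
    exact iSup_le fun μ v hv =>
      Submodule.subset_span ⟨μ, Module.End.mem_eigenspace_iff.mp hv⟩
  let b := Module.Basis.ofSpan hs
  choose μ hμ using fun i => (Module.Basis.ofSpan_subset hs ⟨i, rfl⟩ : b i ∈ s)
  have := FiniteDimensional.fintypeBasisIndex b
  let equiv := Fintype.equivFinOfCardEq (Module.finrank_eq_card_basis b).symm
  refine ⟨b.reindex equiv, μ ∘ equiv.symm, fun i => ?_⟩
  rw [b.reindex_apply]
  exact ⟨Module.End.mem_eigenspace_iff.mpr (hμ _), b.ne_zero _⟩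

lemma trace_eq_sum_of_eigenbasis {R V ι : Type*} [CommRing R] [AddCommGroup V] [Module R V]
    [Fintype ι] (b : Module.Basis ι R V) {f : Module.End R V} {μ : ι → R}
    (h : ∀ i, f (b i) = μ i • b i) : LinearMap.trace R V f = ∑ i, μ i := by
  classical
  simp [LinearMap.trace_eq_matrix_trace R b, Matrix.trace, LinearMap.toMatrix_apply, h]

variable {G V : Type*} [Group G] [AddCommGroup V] [Module ℂ V] [FiniteDimensional ℂ V]

lemma exists_unitary_eigenbasis [Finite G] (ρ : Representation ℂ G V) (g : G) :
    ∃ (b : Module.Basis (Fin (finrank ℂ V)) ℂ V) (μ : Fin (finrank ℂ V) → ℂ),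
      (∀ i, ρ g (b i) = μ i • b i) ∧ ∀ i, ‖μ i‖ = 1 := by
  have horder : orderOf g ≠ 0 := (orderOf_pos g).ne'
  have hpow : ρ g ^ orderOf g = 1 := by rw [← map_pow, pow_orderOf_eq_one, map_one]
  obtain ⟨b, μ, hb⟩ := exists_eigenbasis_of_isSemisimple
    (isSemisimple_of_pow_eq_one (Nat.cast_ne_zero.mpr horder) hpow)
  refine ⟨b, μ, fun i => (hb i).apply_eq_smul, fun i => ?_⟩
  have hroot : μ i ^ orderOf g = 1 := by
    have heigen := (hb i).pow_apply (orderOf g)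
    rw [hpow, Module.End.one_apply] at heigen
    exact smul_left_injective ℂ (hb i).2 (by simpa using heigen.symm)
  exact Complex.norm_eq_one_of_pow_eq_one hroot horder

lemma character_inv_eq_star [Finite G] (ρ : Representation ℂ G V) (g : G) :
    ρ.character g⁻¹ = star (ρ.character g) := by
  obtain ⟨b, μ, hb, hμ⟩ := exists_unitary_eigenbasis ρ g
  have hb' (i) : ρ g⁻¹ (b i) = (μ i)⁻¹ • b i := by
    have hμi : μ i ≠ 0 := norm_ne_zero_iff.mp (by simp [hμ])
    rw [eq_inv_smul_iff₀ hμi, ← map_smul, ← hb, Representation.inv_self_apply]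
  rw [Representation.character, Representation.character, trace_eq_sum_of_eigenbasis b hb,
    trace_eq_sum_of_eigenbasis b hb', star_sum]
  exact Finset.sum_congr rfl fun i _ => Complex.inv_eq_conj (hμ i)

lemma character_re_le_finrank [Finite G] (ρ : Representation ℂ G V) (g : G) :
    (ρ.character g).re ≤ finrank ℂ V := by
  obtain ⟨b, μ, hb, hμ⟩ := exists_unitary_eigenbasis ρ g
  calc (ρ.character g).re = ∑ i, (μ i).re := by
        rw [Representation.character, trace_eq_sum_of_eigenbasis b hb, Complex.re_sum]
    _ ≤ ∑ _i : Fin (finrank ℂ V), 1 :=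
        Finset.sum_le_sum fun i _ => (Complex.re_le_norm _).trans (hμ i).le
    _ = finrank ℂ V := by simp

lemma eq_one_of_finrank_le_character_re [Finite G] {ρ : Representation ℂ G V} {g : G}
    (h : finrank ℂ V ≤ (ρ.character g).re) : ρ g = 1 := by
  obtain ⟨b, μ, hb, hμ⟩ := exists_unitary_eigenbasis ρ g
  have hle (i) : (μ i).re ≤ 1 := (Complex.re_le_norm _).trans (hμ i).le
  have hsum : ∑ i, (μ i).re = ∑ _i : Fin (finrank ℂ V), (1 : ℝ) := by
    refine (Finset.sum_le_sum fun i _ => hle i).antisymm ?_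
    rw [← Complex.re_sum, ← trace_eq_sum_of_eigenbasis b hb]
    simpa [Representation.character] using h
  have hre (i) : (μ i).re = 1 :=
    (Finset.sum_eq_sum_iff_of_le fun i _ => hle i).mp hsum i (Finset.mem_univ i)
  have hμ_one (i) : μ i = 1 := by
    have him := Complex.sq_norm_sub_sq_re (μ i)
    rw [hμ, hre] at him
    exact Complex.ext (hre i) (by simpa using him.symm)
  exact b.ext fun i => by simp [hb, hμ_one]

variable {Y : Type*} [AddCommGroup Y] [Module ℂ Y] [FiniteDimensional ℂ Y]

lemma card_mul_finrank_invariants_eq_sum_re [Fintype G] (ρ : Representation ℂ G V) :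
    (Nat.card G : ℝ) * finrank ℂ ρ.invariants = ∑ g, (ρ.character g).re := by
  have hcard : (Nat.card G : ℂ) ≠ 0 := Nat.cast_ne_zero.mpr Nat.card_pos.ne'
  have := invertibleOfNonzero hcard
  have hchar := ρ.card_inv_mul_sum_char_eq_finrank
  rw [inv_mul_eq_iff_eq_mul₀ hcard] at hchar
  rw [← Complex.re_sum, hchar]
  simp

lemma character_linHom_self_eq_normSq [Finite G] (τ : Representation ℂ G Y) (g : G) :
    (τ.linHom τ).character g = Complex.normSq (τ.character g) := by
  rw [Representation.char_linHom, character_inv_eq_star, Complex.normSq_eq_conj_mul_self,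
    starRingEnd_apply]

lemma re_character_linHom_linHom_self [Finite G] (ρ : Representation ℂ G V)
    (τ : Representation ℂ G Y) (g : G) : ((ρ.linHom (τ.linHom τ)).character g).re =
      (ρ.character g).re * Complex.normSq (τ.character g) := by
  rw [Representation.char_linHom, character_linHom_self_eq_normSq, character_inv_eq_star,
    Complex.re_mul_ofReal, Complex.star_def, Complex.conj_re]

lemma finrank_invariants_linHom_lt_of_injective [Finite G] {ρ : Representation ℂ G V}
    (hρ : Function.Injective ρ) {τ : Representation ℂ G Y} {γ : G} (hγ : γ ≠ 1)
    (hτγ : τ.character γ ≠ 0) :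
    finrank ℂ (ρ.linHom (τ.linHom τ)).invariants <
      finrank ℂ V * finrank ℂ (τ.linHom τ).invariants := by
  have := Fintype.ofFinite G
  have hlt : (ρ.character γ).re < finrank ℂ V :=
    lt_of_not_ge fun h => hγ (hρ ((eq_one_of_finrank_le_character_re h).trans (map_one ρ).symm))
  have hEnd : ∑ g, Complex.normSq (τ.character g) =
      Nat.card G * finrank ℂ (τ.linHom τ).invariants := by
    simp only [card_mul_finrank_invariants_eq_sum_re, character_linHom_self_eq_normSq,
      Complex.ofReal_re]
  have hsum : ∑ g, (ρ.character g).re * Complex.normSq (τ.character g) <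
      ∑ g, (finrank ℂ V : ℝ) * Complex.normSq (τ.character g) :=
    Finset.sum_lt_sum
      (fun g _ => mul_le_mul_of_nonneg_right (character_re_le_finrank ρ g)
        (Complex.normSq_nonneg _))
      ⟨γ, Finset.mem_univ γ, mul_lt_mul_of_pos_right hlt (Complex.normSq_pos.mpr hτγ)⟩
  simp only [← Finset.mul_sum, ← re_character_linHom_linHom_self,
    ← card_mul_finrank_invariants_eq_sum_re, hEnd, mul_left_comm (finrank ℂ V : ℝ)] at hsum
  exact_mod_cast lt_of_mul_lt_mul_left hsum (Nat.cast_nonneg _)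

end Characters

/-! ### Symplectic linear algebra -/

section Symplectic

open Module (finrank)
open LinearMap (BilinForm)

variable {K P : Type*} [Field K] [AddCommGroup P] [Module K P]

lemma nondegenerate_of_isAlt_of_separatingLeft {ω : BilinForm K P} (hω : ω.IsAlt)
    (hsep : ∀ x, (∀ y, ω x y = 0) → x = 0) : ω.Nondegenerate :=
  ⟨hsep, fun y hy => hsep y fun x => by rw [← hω.neg_eq, hy, neg_zero]⟩

variable [FiniteDimensional K P]

lemma even_finrank_of_isAlt_of_nondegenerate [NeZero (2 : K)] {ω : BilinForm K P}
    (hω : ω.IsAlt) (hnd : ω.Nondegenerate) : Even (finrank K P) := by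
  let b := Module.finBasis K P
  let M := LinearMap.BilinForm.toMatrix b ω
  have hdet : M.det ≠ 0 := (BilinForm.nondegenerate_iff_det_ne_zero b).mp hnd
  have htranspose : M.transpose = -M := by
    ext i j
    simp [M, LinearMap.BilinForm.toMatrix_apply, hω.neg_eq (b i)]
  have hdet_neg : M.det = (-1) ^ finrank K P * M.det := by
    conv_lhs => rw [← Matrix.det_transpose, htranspose, Matrix.det_neg, Fintype.card_fin]
  by_contra hodd
  rw [(Nat.not_even_iff_odd.mp hodd).neg_one_pow] at hdet_neg
  have htwo : 2 * M.det = 0 := by linear_combination hdet_neg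
  exact hdet ((mul_eq_zero.mp htwo).resolve_left (NeZero.ne 2))

/-- The codimension and the dimension of `U` have the same parity, so they differ by less than two
only if they agree. -/
lemma orthogonal_eq_of_isotropic [NeZero (2 : K)] {ω : BilinForm K P} (hω : ω.IsAlt)
    (hnd : ω.Nondegenerate) {U : Submodule K P} (hU : U ≤ ω.orthogonal U)
    (hdim : finrank K P < 2 * finrank K U + 2) : ω.orthogonal U = U := by
  refine (Submodule.eq_of_le_of_finrank_le hU ?_).symm
  rw [BilinForm.finrank_orthogonal hnd]
  obtain ⟨k, hk⟩ := even_finrank_of_isAlt_of_nondegenerate hω hnd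
  omega

lemma mem_range_of_forall_isOrtho_range [NeZero (2 : K)] {Q : Type*} [AddCommGroup Q]
    [Module K Q] [FiniteDimensional K Q] {ω : BilinForm K P} (hω : ω.IsAlt)
    (hnd : ω.Nondegenerate) {δ : Q →ₗ[K] P} (hiso : ∀ x y, ω (δ x) (δ y) = 0)
    (hker : finrank K (LinearMap.ker δ) ≤ 1) (hdim : finrank K P < 2 * finrank K Q) {z : P}
    (hz : ∀ x, ω (δ x) z = 0) : z ∈ LinearMap.range δ := by
  have hrank := δ.finrank_range_add_finrank_ker
  have hLagrangian : ω.orthogonal (LinearMap.range δ) = LinearMap.range δ := by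
    refine orthogonal_eq_of_isotropic hω hnd ?_ (by omega)
    rintro _ ⟨y, rfl⟩ _ ⟨x, rfl⟩
    exact hiso x y
  rw [← hLagrangian]
  rintro _ ⟨x, rfl⟩
  exact hz x

lemma exists_mem_eq_of_forall_isOrtho [NeZero (2 : K)] {Q : Type*} [AddCommGroup Q] [Module K Q]
    [FiniteDimensional K Q] {ω : BilinForm K P} (hω : ω.IsAlt) {U : Submodule K P}
    (hnd : (ω.restrict U).Nondegenerate) {S : Submodule K Q} {δ : Q →ₗ[K] P}
    (hδ : ∀ x ∈ S, δ x ∈ U) (hiso : ∀ x ∈ S, ∀ y ∈ S, ω (δ x) (δ y) = 0) {e : Q}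
    (hker : ∀ x ∈ S, δ x = 0 → x ∈ K ∙ e) (hdim : finrank K U < 2 * finrank K S) {z : P}
    (hzU : z ∈ U) (hz : ∀ x ∈ S, ω (δ x) z = 0) : ∃ x ∈ S, δ x = z := by
  have hker_one : finrank K (LinearMap.ker (δ.restrict hδ)) ≤ 1 := by
    have hle : (LinearMap.ker (δ.restrict hδ)).map S.subtype ≤ K ∙ e := by
      rintro _ ⟨x, hx, rfl⟩
      exact hker x x.2 (congrArg Subtype.val hx)
    rw [← Submodule.finrank_map_subtype_eq]
    exact (Submodule.finrank_mono hle).trans (by simpa using finrank_span_le_card (R := K) {e})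
  obtain ⟨x, hx⟩ := mem_range_of_forall_isOrtho_range (δ := δ.restrict hδ) (fun u => hω u.1) hnd
    (fun x y => hiso x x.2 y y.2) hker_one hdim (z := ⟨z, hzU⟩) fun x => hz x x.2
  exact ⟨x, x.2, congrArg Subtype.val hx⟩

lemma restrict_invariants_nondegenerate {G V : Type*} [Group G] [Fintype G]
    [Invertible (Fintype.card G : K)] [AddCommGroup V] [Module K V] {ρ : Representation K G V}
    {ω : BilinForm K V} (hω : ω.IsAlt) (hsep : ∀ x, (∀ y, ω x y = 0) → x = 0)
    (hinv : ∀ g x y, ω (ρ g x) (ρ g y) = ω x y) : (ω.restrict ρ.invariants).Nondegenerate := by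
  refine nondegenerate_of_isAlt_of_separatingLeft (fun x => hω x.1) fun x hx => Subtype.ext ?_
  have hterm (g : G) (y : V) : ω x (ρ g y) = ω x y := by
    conv_lhs => rw [← x.2 g, hinv]
  have haverage (y : V) : ω x (ρ.averageMap y) = ω x y := by
    rw [Representation.averageMap, GroupAlgebra.average]
    simp only [map_smul, map_sum, Representation.asAlgebraHom_of, LinearMap.smul_apply,
      LinearMap.sum_apply, hterm, Finset.sum_const, Finset.card_univ, ← Nat.cast_smul_eq_nsmul K,
      smul_smul, invOf_mul_self, one_smul]
  exact hsep x fun y => haverage y ▸ hx ⟨_, ρ.averageMap_invariant y⟩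

end Symplectic

/-! ### The Koszul complex in rank one -/

section KoszulComplex

open Module (finrank)
open LinearMap (BilinForm)

section Algebra

variable {R A : Type*} [CommRing R] [Ring A] [Algebra R A]

/-- The differential `m ↦ (v ↦ [m, X v])` from degree zero to degree one of the Koszul complex
attached to a pair of operators `X : R² → A`. -/
def koszulZero (X : (Fin 2 → R) →ₗ[R] A) : A →ₗ[R] (Fin 2 → R) →ₗ[R] A :=
  LinearMap.mk₂ R (fun m v => m * X v - X v * m)
    (fun _ _ _ => by simp only [add_mul, mul_add]; abel)
    (fun _ _ _ => by simp only [smul_mul_assoc, mul_smul_comm, smul_sub])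
    (fun _ _ _ => by simp only [map_add, add_mul, mul_add]; abel)
    (fun _ _ _ => by simp only [map_smul, smul_mul_assoc, mul_smul_comm, smul_sub])

/-- The differential from degree one to degree two of the Koszul complex: the derivative of
`X ↦ [X e₀, X e₁]` in the direction `φ`. -/
def koszulOne (X φ : (Fin 2 → R) →ₗ[R] A) : A :=
  φ (Pi.single 0 1) * X (Pi.single 1 1) - X (Pi.single 1 1) * φ (Pi.single 0 1) +
    (X (Pi.single 0 1) * φ (Pi.single 1 1) - φ (Pi.single 1 1) * X (Pi.single 0 1))

lemma koszulZero_apply (X : (Fin 2 → R) →ₗ[R] A) (m : A) (v : Fin 2 → R) :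
    koszulZero X m v = m * X v - X v * m := rfl

lemma koszulOne_koszulZero (X : (Fin 2 → R) →ₗ[R] A) (m : A) :
    koszulOne X (koszulZero X m) =
      m * (X (Pi.single 0 1) * X (Pi.single 1 1) - X (Pi.single 1 1) * X (Pi.single 0 1)) -
        (X (Pi.single 0 1) * X (Pi.single 1 1) - X (Pi.single 1 1) * X (Pi.single 0 1)) * m := by
  simp only [koszulOne, koszulZero_apply]
  noncomm_ring

end Algebra

variable {K Y : Type*} [Field K] [AddCommGroup Y] [Module K Y]

/-- The symplectic form on `Hom(K², End Y)` combining the determinant on `K²` with the trace form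
on `End Y`. -/
def symplecticTraceForm (K Y : Type*) [Field K] [AddCommGroup Y] [Module K Y] :
    BilinForm K ((Fin 2 → K) →ₗ[K] Module.End K Y) :=
  LinearMap.mk₂ K
    (fun φ ψ => LinearMap.trace K Y
      (φ (Pi.single 0 1) * ψ (Pi.single 1 1) - φ (Pi.single 1 1) * ψ (Pi.single 0 1)))
    (fun _ _ _ => by simp only [LinearMap.add_apply, add_mul, map_sub, map_add]; ring)
    (fun _ _ _ => by simp only [LinearMap.smul_apply, smul_mul_assoc, ← smul_sub, map_smul])
    (fun _ _ _ => by simp only [LinearMap.add_apply, mul_add, map_sub, map_add]; ring)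
    (fun _ _ _ => by simp only [LinearMap.smul_apply, mul_smul_comm, ← smul_sub, map_smul])

lemma symplecticTraceForm_apply (φ ψ : (Fin 2 → K) →ₗ[K] Module.End K Y) :
    symplecticTraceForm K Y φ ψ = LinearMap.trace K Y
      (φ (Pi.single 0 1) * ψ (Pi.single 1 1) - φ (Pi.single 1 1) * ψ (Pi.single 0 1)) := rfl

lemma symplecticTraceForm_isAlt : (symplecticTraceForm K Y).IsAlt := fun φ => by
  rw [symplecticTraceForm_apply, map_sub, LinearMap.trace_mul_comm, sub_self]

lemma symplecticTraceForm_koszulZero (X φ : (Fin 2 → K) →ₗ[K] Module.End K Y)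
    (m : Module.End K Y) : symplecticTraceForm K Y (koszulZero X m) φ =
      LinearMap.trace K Y (m * koszulOne X φ) := by
  have hcyclic (a b c : Module.End K Y) :
      LinearMap.trace K Y (a * b * c) = LinearMap.trace K Y (b * (c * a)) := by
    rw [mul_assoc, LinearMap.trace_mul_comm, mul_assoc]
  simp only [symplecticTraceForm_apply, koszulZero_apply, koszulOne, sub_mul, mul_add, mul_sub,
    map_sub, map_add, hcyclic (X _) m, mul_assoc m]
  ring

lemma symplecticTraceForm_comp (φ ψ : (Fin 2 → K) →ₗ[K] Module.End K Y)
    (f : (Fin 2 → K) →ₗ[K] Fin 2 → K) :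
    symplecticTraceForm K Y (φ ∘ₗ f) (ψ ∘ₗ f) =
      LinearMap.det f * symplecticTraceForm K Y φ ψ := by
  have hexpand (χ : (Fin 2 → K) →ₗ[K] Module.End K Y) (v : Fin 2 → K) :
      χ v = v 0 • χ (Pi.single 0 1) + v 1 • χ (Pi.single 1 1) := by
    rw [← map_smul, ← map_smul, ← map_add]
    congr 1
    ext i
    fin_cases i <;> simp
  rw [← LinearMap.det_toMatrix', Matrix.det_fin_two]
  simp only [LinearMap.toMatrix'_apply, symplecticTraceForm_apply, LinearMap.comp_apply,
    hexpand φ (f _), hexpand ψ (f _), add_mul, mul_add, smul_mul_assoc, mul_smul_comm, map_sub,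
    map_add, map_smul, smul_eq_mul]
  ring

lemma eq_zero_of_forall_trace_mul_eq_zero [FiniteDimensional K Y] {a : Module.End K Y}
    (h : ∀ T, LinearMap.trace K Y (a * T) = 0) : a = 0 := by
  refine LinearMap.ext fun y => (Module.forall_dual_apply_eq_zero_iff K (a y)).mp fun ξ => ?_
  have hrankOne : a * ξ.smulRight y = ξ.smulRight (a y) := by ext v; simp
  rw [← LinearMap.trace_smulRight, ← hrankOne, h]

lemma eq_zero_of_symplecticTraceForm_eq_zero [FiniteDimensional K Y]
    {φ : (Fin 2 → K) →ₗ[K] Module.End K Y} (h : ∀ ψ, symplecticTraceForm K Y φ ψ = 0) :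
    φ = 0 := by
  have hzero : φ (Pi.single 0 1) = 0 := eq_zero_of_forall_trace_mul_eq_zero fun T => by
    simpa [symplecticTraceForm_apply] using
      h ((LinearMap.proj 1 : (Fin 2 → K) →ₗ[K] K).smulRight T)
  have hone : φ (Pi.single 1 1) = 0 := eq_zero_of_forall_trace_mul_eq_zero fun T => by
    simpa [symplecticTraceForm_apply] using
      h ((LinearMap.proj 0 : (Fin 2 → K) →ₗ[K] K).smulRight T)
  refine (Pi.basisFun K (Fin 2)).ext fun i => ?_
  fin_cases i <;> simpa

section Equivariant

variable {G : Type*} [Group G] {ρ : Representation K G (Fin 2 → K)} {τ : Representation K G Y}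

lemma mul_mul_inv_eq_iff {a b : Module.End K Y} {g : G} :
    τ g * a * τ g⁻¹ = b ↔ τ g * a = b * τ g := by
  have hinv : τ g * τ g⁻¹ = 1 := by simp [← map_mul]
  have hinv' : τ g⁻¹ * τ g = 1 := by simp [← map_mul]
  constructor
  · rintro rfl
    rw [mul_assoc _ (τ g⁻¹), hinv', mul_one]
  · intro h
    rw [h, mul_assoc, hinv, mul_one]

lemma mem_invariants_linHom_self_iff {m : Module.End K Y} :
    m ∈ (τ.linHom τ).invariants ↔ ∀ g, Commute (τ g) m :=
  forall_congr' fun _ => mul_mul_inv_eq_iff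

lemma mem_invariants_linHom_linHom_self_iff {φ : (Fin 2 → K) →ₗ[K] Module.End K Y} :
    φ ∈ (ρ.linHom (τ.linHom τ)).invariants ↔ ∀ g v, τ g * φ v * τ g⁻¹ = φ (ρ g v) := by
  refine (Representation.mem_linHom_invariants_iff_isIntertwining φ).trans ⟨?_, ?_⟩
  · exact fun h g v => (h.isIntertwining g v).symm
  · exact fun h => ⟨fun g v => (h g v).symm⟩

lemma symplecticTraceForm_linHom (hdet : ∀ g, LinearMap.det (ρ g) = 1) (g : G)
    (φ ψ : (Fin 2 → K) →ₗ[K] Module.End K Y) :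
    symplecticTraceForm K Y (ρ.linHom (τ.linHom τ) g φ) (ρ.linHom (τ.linHom τ) g ψ) =
      symplecticTraceForm K Y φ ψ := by
  have htrace (a : Module.End K Y) :
      LinearMap.trace K Y (τ.linHom τ g a) = LinearMap.trace K Y a := by
    change LinearMap.trace K Y (τ g * (a * τ g⁻¹)) = _
    rw [LinearMap.trace_mul_comm, mul_assoc, ← map_mul]
    simp
  have hmul (a b : Module.End K Y) :
      τ.linHom τ g (a * b) = τ.linHom τ g a * τ.linHom τ g b := by
    ext y
    simp [Module.End.mul_apply]
  have hconj : symplecticTraceForm K Y (τ.linHom τ g ∘ₗ φ) (τ.linHom τ g ∘ₗ ψ) =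
      symplecticTraceForm K Y φ ψ := by
    simp only [symplecticTraceForm_apply, LinearMap.comp_apply, ← hmul, ← map_sub, htrace]
  change symplecticTraceForm K Y ((τ.linHom τ g ∘ₗ φ) ∘ₗ ρ g⁻¹)
    ((τ.linHom τ g ∘ₗ ψ) ∘ₗ ρ g⁻¹) = _
  rw [symplecticTraceForm_comp, hdet, one_mul, hconj]

lemma symplecticTraceForm_restrict_invariants_nondegenerate [Finite G] [CharZero K]
    [FiniteDimensional K Y] (hdet : ∀ g, LinearMap.det (ρ g) = 1) :
    ((symplecticTraceForm K Y).restrict (ρ.linHom (τ.linHom τ)).invariants).Nondegenerate := by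
  have := Fintype.ofFinite G
  have := invertibleOfNonzero (Nat.cast_ne_zero.mpr Fintype.card_ne_zero : (Fintype.card G : K) ≠ 0)
  exact restrict_invariants_nondegenerate symplecticTraceForm_isAlt
    (fun _ => eq_zero_of_symplecticTraceForm_eq_zero) (symplecticTraceForm_linHom hdet)

lemma koszulZero_mem_invariants {X : (Fin 2 → K) →ₗ[K] Module.End K Y}
    (hX : X ∈ (ρ.linHom (τ.linHom τ)).invariants) {m : Module.End K Y}
    (hm : m ∈ (τ.linHom τ).invariants) :
    koszulZero X m ∈ (ρ.linHom (τ.linHom τ)).invariants := by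
  rw [mem_invariants_linHom_linHom_self_iff] at hX ⊢
  rw [mem_invariants_linHom_self_iff] at hm
  intro g v
  have hinv : Commute (τ g⁻¹) m := hm g⁻¹
  simp only [koszulZero_apply, ← hX, mul_sub, sub_mul, mul_assoc, hinv.eq, (hm g).left_comm]

end Equivariant

lemma exists_koszulZero_eq_of_koszulOne_eq_zero {G Y : Type*} [Group G] [Finite G]
    [AddCommGroup Y] [Module ℂ Y] [FiniteDimensional ℂ Y]
    {ρ : Representation ℂ G (Fin 2 → ℂ)} (hρ : Function.Injective ρ)
    (hdet : ∀ g, LinearMap.det (ρ g) = 1) {τ : Representation ℂ G Y} {γ : G} (hγ : γ ≠ 1)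
    (hτγ : τ.character γ ≠ 0) {X : (Fin 2 → ℂ) →ₗ[ℂ] Module.End ℂ Y}
    (hX : X ∈ (ρ.linHom (τ.linHom τ)).invariants)
    (hcomplex : ∀ m ∈ (τ.linHom τ).invariants, koszulOne X (koszulZero X m) = 0)
    (hker : ∀ m ∈ (τ.linHom τ).invariants, koszulZero X m = 0 → m ∈ ℂ ∙ (1 : Module.End ℂ Y))
    {φ : (Fin 2 → ℂ) →ₗ[ℂ] Module.End ℂ Y} (hφ : φ ∈ (ρ.linHom (τ.linHom τ)).invariants)
    (hφX : koszulOne X φ = 0) :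
    ∃ m ∈ (τ.linHom τ).invariants, koszulZero X m = φ := by
  have hdim : finrank ℂ (ρ.linHom (τ.linHom τ)).invariants <
      2 * finrank ℂ (τ.linHom τ).invariants := by
    simpa using finrank_invariants_linHom_lt_of_injective hρ hγ hτγ
  have hortho {ψ} (hψ : koszulOne X ψ = 0) (m) :
      symplecticTraceForm ℂ Y (koszulZero X m) ψ = 0 := by
    rw [symplecticTraceForm_koszulZero, hψ, mul_zero, map_zero]
  exact exists_mem_eq_of_forall_isOrtho symplecticTraceForm_isAlt
    (symplecticTraceForm_restrict_invariants_nondegenerate hdet)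
    (fun _ => koszulZero_mem_invariants hX) (fun m _ m' hm' => hortho (hcomplex m' hm') m) hker
    hdim hφ (fun m _ => hortho hφX m)

end KoszulComplex

/-! ### Irreducible representations of algebras with a rank one commutation relation -/

section Irreducible

variable {K A Y : Type*} [Field K] [Ring A] [Algebra K A] [AddCommGroup Y] [Module K Y]

/-- Burnside's theorem. -/
lemma surjective_of_irreducible [IsAlgClosed K] [FiniteDimensional K Y] [Nontrivial Y]
    {π : A →ₐ[K] Module.End K Y}
    (hirr : ∀ U : Submodule K Y, (∀ a, U.map (π a) ≤ U) → U = ⊥ ∨ U = ⊤) :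
    Function.Surjective π := by
  classical
  let : Module A Y := Module.compHom Y (π : A →+* Module.End K Y)
  have hsmul (a : A) (y : Y) : a • y = π a y := rfl
  have : IsScalarTower K A Y := ⟨fun z a y => by simp [hsmul]⟩
  have : IsSimpleModule A Y := by
    rw [isSimpleModule_iff]
    refine ⟨fun U => ?_⟩
    have hstable (a : A) : (U.restrictScalars K).map (π a) ≤ U.restrictScalars K := by
      rintro _ ⟨y, hy, rfl⟩
      exact U.smul_mem a hy
    simpa using hirr (U.restrictScalars K) hstable
  have hscalar := (IsSimpleModule.algebraMap_end_bijective_of_isAlgClosed (A := A) (V := Y) K).2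
  intro f
  let f' : Module.End (Module.End A Y) Y :=
    { toFun := f
      map_add' := map_add f
      map_smul' := fun s y => by
        obtain ⟨z, rfl⟩ := hscalar s
        exact map_smul f z y }
  let b := Module.finBasis K Y
  obtain ⟨a, ha⟩ := jacobson_density (R := A) f' (Finset.univ.image b)
  exact ⟨a, b.ext fun i => (ha _ (Finset.mem_image_of_mem _ (Finset.mem_univ i))).symm⟩

lemma mem_span_one_of_commute {π : A →ₐ[K] Module.End K Y} (hπ : Function.Surjective π)
    {S : Set A} (hS : Algebra.adjoin K S = ⊤) {m : Module.End K Y}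
    (hm : ∀ s ∈ S, Commute (π s) m) : m ∈ K ∙ (1 : Module.End K Y) := by
  have hle : Algebra.adjoin K S ≤ (Subalgebra.centralizer K {m}).comap π :=
    Algebra.adjoin_le fun s hs => (Subalgebra.mem_centralizer_iff K).mpr <| by
      rintro _ rfl
      exact (hm s hs).symm.eq
  have hcenter : m ∈ Subalgebra.center K (Module.End K Y) := by
    rw [Subalgebra.mem_center_iff]
    intro f
    obtain ⟨a, rfl⟩ := hπ f
    have ha : a ∈ Algebra.adjoin K S := hS ▸ Algebra.mem_top
    exact (Subalgebra.mem_centralizer_iff K |>.mp (hle ha) m rfl).symm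
  rw [Algebra.IsCentral.center_eq_bot] at hcenter
  obtain ⟨z, rfl⟩ := Algebra.mem_bot.mp hcenter
  exact Submodule.mem_span_singleton.mpr ⟨z, (Algebra.algebraMap_eq_smul_one z).symm⟩

/-- Taking traces in the commutator kills the left-hand side but not the summand `1`. -/
lemma exists_character_ne_zero_of_commutator_eq [CharZero K] [FiniteDimensional K Y] [Nontrivial Y]
    {G : Type*} [Group G] [Fintype G] [DecidableEq G] {τ : Representation K G Y} {c : G → K}
    {S T : Module.End K Y}
    (hcomm : S * T - T * S = 1 + ∑ g ∈ Finset.univ.filter (fun g => g ≠ 1), c g • τ g) :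
    ∃ g ≠ 1, τ.character g ≠ 0 := by
  by_contra! hzero
  have htrace := congrArg (LinearMap.trace K Y) hcomm
  have hsum : ∑ g ∈ Finset.univ.filter (fun g : G => g ≠ 1), c g • LinearMap.trace K Y (τ g) = 0 :=
    Finset.sum_eq_zero fun g hg => by
      have hg0 : LinearMap.trace K Y (τ g) = 0 := hzero g (Finset.mem_filter.mp hg).2
      rw [hg0, smul_zero]
  rw [map_sub, LinearMap.trace_mul_comm, sub_self, map_add, map_sum, LinearMap.trace_one] at htrace
  simp only [map_smul, hsum, add_zero] at htrace
  exact Module.finrank_pos.ne (Nat.cast_injective (R := K) (by simpa using htrace))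

end Irreducible

section RankOne

variable {G B Y : Type*} [Group G] [Ring B] [Algebra ℂ B] [AddCommGroup Y] [Module ℂ Y]
  {e : G →* B} {π : B →ₐ[ℂ] Module.End ℂ Y}

/-- The representation obtained by restricting a `B`-module to a group mapping to `B`. -/
def restrictGroup (π : B →ₐ[ℂ] Module.End ℂ Y) (e : G →* B) : Representation ℂ G Y :=
  (π : B →* Module.End ℂ Y).comp e

lemma restrictGroup_apply (g : G) : restrictGroup π e g = π (e g) := rfl

/-- The relations of the symplectic reflection algebra `H_{1,c}(G)`, imposed on elements `e g` and
`x v` of an arbitrary algebra: `g v g⁻¹ = ρ(g) v` and `[x₀, x₁] = 1 + ∑_{g ≠ 1} c_g g`. -/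
structure SatisfiesRankOneRelations [Fintype G] [DecidableEq G]
    (ρ : Representation ℂ G (Fin 2 → ℂ)) (c : G → ℂ) (e : G →* B) (x : (Fin 2 → ℂ) →ₗ[ℂ] B) :
    Prop where
  conj : ∀ g v, e g * x v * e g⁻¹ = x (ρ g v)
  commutator : x (Pi.single 0 1) * x (Pi.single 1 1) - x (Pi.single 1 1) * x (Pi.single 0 1) =
    1 + ∑ g ∈ Finset.univ.filter (fun g => g ≠ 1), c g • e g

variable [Fintype G] [DecidableEq G] {ρ : Representation ℂ G (Fin 2 → ℂ)} {c : G → ℂ}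
  {x : (Fin 2 → ℂ) →ₗ[ℂ] B}

namespace SatisfiesRankOneRelations

lemma comp_mem_invariants (h : SatisfiesRankOneRelations ρ c e x) :
    π.toLinearMap ∘ₗ x ∈
      (ρ.linHom ((restrictGroup π e).linHom (restrictGroup π e))).invariants := by
  refine mem_invariants_linHom_linHom_self_iff.mpr fun g v => ?_
  simp [restrictGroup_apply, ← h.conj]

lemma derivation_comp_mem_invariants (h : SatisfiesRankOneRelations ρ c e x)
    {d : B →ₗ[ℂ] Module.End ℂ Y} (hd : d ∈ derivationsAlong π) (hde : ∀ g, d (e g) = 0) :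
    d ∘ₗ x ∈ (ρ.linHom ((restrictGroup π e).linHom (restrictGroup π e))).invariants := by
  refine mem_invariants_linHom_linHom_self_iff.mpr fun g v => ?_
  simp [restrictGroup_apply, ← h.conj, hd _ (e g⁻¹), hd (e g), hde]

lemma koszulOne_derivation_comp_eq_zero (h : SatisfiesRankOneRelations ρ c e x)
    {d : B →ₗ[ℂ] Module.End ℂ Y} (hd : d ∈ derivationsAlong π) (hde : ∀ g, d (e g) = 0) :
    koszulOne (π.toLinearMap ∘ₗ x) (d ∘ₗ x) = 0 := by
  have hdcomm := congrArg d h.commutator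
  simp only [map_sub, map_add, map_sum, map_smul, hde, smul_zero, Finset.sum_const_zero,
    apply_one_eq_zero_of_mem_derivationsAlong hd, hd (x _), add_zero] at hdcomm
  simp only [koszulOne, LinearMap.comp_apply, AlgHom.toLinearMap_apply]
  rw [← hdcomm]
  abel

lemma koszulOne_koszulZero_comp_eq_zero (h : SatisfiesRankOneRelations ρ c e x)
    {m : Module.End ℂ Y} (hm : m ∈ ((restrictGroup π e).linHom (restrictGroup π e)).invariants) :
    koszulOne (π.toLinearMap ∘ₗ x) (koszulZero (π.toLinearMap ∘ₗ x) m) = 0 := by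
  have hcommute (g : G) : Commute (π (e g)) m := mem_invariants_linHom_self_iff.mp hm g
  rw [koszulOne_koszulZero, sub_eq_zero]
  simp only [LinearMap.comp_apply, AlgHom.toLinearMap_apply, ← map_mul, ← map_sub, h.commutator]
  simp only [map_add, map_one, map_sum, map_smul]
  exact ((Commute.one_left m).add_left (Commute.sum_left _ _ _ fun g _ =>
    (hcommute g).smul_left (c g))).symm.eq

variable [FiniteDimensional ℂ Y] [Nontrivial Y]

lemma exists_character_restrictGroup_ne_zero (h : SatisfiesRankOneRelations ρ c e x) :
    ∃ g ≠ 1, (restrictGroup π e).character g ≠ 0 := by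
  have hcomm := congrArg π h.commutator
  simp only [map_sub, map_mul, map_add, map_one, map_sum, map_smul] at hcomm
  exact exists_character_ne_zero_of_commutator_eq hcomm

lemma exists_eq_innerDerivation_of_apply_group_eq_zero (h : SatisfiesRankOneRelations ρ c e x)
    (hρ : Function.Injective ρ) (hdet : ∀ g, LinearMap.det (ρ g) = 1)
    (hgen : Algebra.adjoin ℂ (Set.range e ∪ Set.range x) = ⊤) (hπ : Function.Surjective π)
    {d : B →ₗ[ℂ] Module.End ℂ Y} (hd : d ∈ derivationsAlong π) (hde : ∀ g, d (e g) = 0) :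
    ∃ m, innerDerivation π m = d := by
  have hscalar (m) (hm : m ∈ ((restrictGroup π e).linHom (restrictGroup π e)).invariants)
      (hmx : koszulZero (π.toLinearMap ∘ₗ x) m = 0) : m ∈ ℂ ∙ (1 : Module.End ℂ Y) := by
    refine mem_span_one_of_commute hπ hgen ?_
    rintro _ (⟨g, rfl⟩ | ⟨v, rfl⟩)
    · exact mem_invariants_linHom_self_iff.mp hm g
    · exact (sub_eq_zero.mp (LinearMap.congr_fun hmx v)).symm
  obtain ⟨γ, hγ, hcharacter⟩ := h.exists_character_restrictGroup_ne_zero (π := π)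
  obtain ⟨m, hm, hmx⟩ := exists_koszulZero_eq_of_koszulOne_eq_zero hρ hdet hγ hcharacter
    h.comp_mem_invariants (fun _ => h.koszulOne_koszulZero_comp_eq_zero) hscalar
    (h.derivation_comp_mem_invariants hd hde) (h.koszulOne_derivation_comp_eq_zero hd hde)
  refine ⟨m, (eq_innerDerivation_of_adjoin_eq_top hgen hd ?_).symm⟩
  rintro _ (⟨g, rfl⟩ | ⟨v, rfl⟩)
  · have hcommute : Commute (π (e g)) m := mem_invariants_linHom_self_iff.mp hm g
    rw [hde, innerDerivation_apply, hcommute.eq, sub_self]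
  · exact (LinearMap.congr_fun hmx v).symm

theorem derivationsAlong_le_range_innerDerivation (h : SatisfiesRankOneRelations ρ c e x)
    (hρ : Function.Injective ρ) (hdet : ∀ g, LinearMap.det (ρ g) = 1)
    (hgen : Algebra.adjoin ℂ (Set.range e ∪ Set.range x) = ⊤) (hπ : Function.Surjective π) :
    derivationsAlong π ≤ LinearMap.range (innerDerivation π) := by
  intro d hd
  have := invertibleOfNonzero (Nat.cast_ne_zero.mpr Fintype.card_ne_zero : (Fintype.card G : ℂ) ≠ 0)
  let T := averagedImplementer π e d
  obtain ⟨m, hm⟩ := h.exists_eq_innerDerivation_of_apply_group_eq_zero hρ hdet hgen hπ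
    (sub_mem hd (innerDerivation_mem_derivationsAlong π T)) fun g => by
      rw [LinearMap.sub_apply, apply_group_eq_innerDerivation_averagedImplementer hd, sub_self]
  exact ⟨m + T, by rw [map_add, hm, sub_add_cancel]⟩

end SatisfiesRankOneRelations

end RankOne

/-! ### The algebra `H_{1,c}(Γ)` -/

section Generation

variable {R A B : Type*} [CommRing R] [Ring A] [Algebra R A] [Ring B] [Algebra R B]

lemma adjoin_range_mkAlgHom_ι {S : Type*} (r : FreeAlgebra R S → FreeAlgebra R S → Prop) :
    Algebra.adjoin R (Set.range fun s => RingQuot.mkAlgHom R r (FreeAlgebra.ι R s)) = ⊤ := by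
  rw [Set.range_comp' (RingQuot.mkAlgHom R r) (FreeAlgebra.ι R), ← AlgHom.map_adjoin,
    FreeAlgebra.adjoin_range_ι, Algebra.map_top, AlgHom.range_eq_top]
  exact RingQuot.mkAlgHom_surjective R r

lemma semiconjBy_map_of_adjoin_eq_top {S : Set B} (hS : Algebra.adjoin R S = ⊤)
    {f g : B →ₐ[R] A} {a : A} (h : ∀ s ∈ S, SemiconjBy a (f s) (g s)) (b : B) :
    SemiconjBy a (f b) (g b) := by
  have hb : b ∈ Algebra.adjoin R S := hS ▸ Algebra.mem_top
  induction hb using Algebra.adjoin_induction with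
  | mem s hs => exact h s hs
  | algebraMap r =>
    rw [AlgHom.commutes, AlgHom.commutes]
    exact (Algebra.commutes r a).symm
  | add b b' _ _ hb hb' => simpa only [map_add] using hb.add_right hb'
  | mul b b' _ _ hb hb' => simpa only [map_mul] using hb.mul_right hb'

lemma commute_map_of_adjoin_eq_top {S : Set B} (hS : Algebra.adjoin R S = ⊤)
    {f g : B →ₐ[R] A} (h : ∀ s ∈ S, ∀ t ∈ S, Commute (f s) (g t)) (b b' : B) :
    Commute (f b) (g b') :=
  semiconjBy_map_of_adjoin_eq_top hS (fun t ht =>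
    (semiconjBy_map_of_adjoin_eq_top hS (fun s hs => (h s hs t ht).symm) b : Commute _ _).symm) b'

end Generation

section RankOneAlgebra

variable (Γ : Subgroup SL2)

/-- The tautological representation of `Γ ⊂ SL(2,ℂ)` on `L = ℂ²`. -/
def standardRep : Representation ℂ Γ (Fin 2 → ℂ) where
  toFun γ := Matrix.mulVecLin ((γ : SL2) : Matrix (Fin 2) (Fin 2) ℂ)
  map_one' := by simp [Module.End.one_eq_id]
  map_mul' γ δ := by simp [Matrix.mulVecLin_mul, Module.End.mul_eq_comp]

lemma standardRep_apply (γ : Γ) (v : Fin 2 → ℂ) :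
    standardRep Γ γ v = Matrix.mulVec ((γ : SL2) : Matrix (Fin 2) (Fin 2) ℂ) v := rfl

lemma standardRep_injective : Function.Injective (standardRep Γ) := fun _ _ h =>
  Subtype.ext (Subtype.ext (Matrix.toLin'.injective h))

lemma det_standardRep (γ : Γ) : LinearMap.det (standardRep Γ γ) = 1 := by
  change LinearMap.det (Matrix.toLin' ((γ : SL2) : Matrix (Fin 2) (Fin 2) ℂ)) = 1
  rw [LinearMap.det_toLin', Matrix.SpecialLinearGroup.det_coe]

lemma lift_bV {A : Type*} [Ring A] [Algebra ℂ A] (e : Γ → A)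
    (x : (Fin 2 → ℂ) →ₗ[ℂ] A) (v : Fin 2 → ℂ) :
    FreeAlgebra.lift ℂ (Sum.elim e fun p => x (Pi.single p 1)) (bV Γ v) = x v := by
  have hv : v = v 0 • Pi.single 0 1 + v 1 • Pi.single 1 1 := by
    ext p
    fin_cases p <;> simp
  rw [congrArg x hv, map_add, map_smul, map_smul]
  simp [bV, bX]

variable [Fintype Γ] [DecidableEq Γ] (c : Γ → ℂ)

/-- The group homomorphism `γ ↦ γ` from `Γ` to `H_{1,c}(Γ)`. -/
def oneGHom : Γ →* Hone Γ c where
  toFun := oneG Γ c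
  map_one' := by simpa [oneG] using RingQuot.mkAlgHom_rel ℂ (BRel.grp_one (c := c))
  map_mul' γ δ := by simpa [oneG] using (RingQuot.mkAlgHom_rel ℂ (BRel.grp_mul (c := c) γ δ)).symm

/-- The linear map `L = ℂ² → H_{1,c}(Γ)`, `v ↦ v₀ x + v₁ y`. -/
def oneV : (Fin 2 → ℂ) →ₗ[ℂ] Hone Γ c :=
  Fintype.linearCombination ℂ (oneX Γ c)

lemma oneV_single (p : Fin 2) : oneV Γ c (Pi.single p 1) = oneX Γ c p := by
  simp [oneV, Fintype.linearCombination_apply_single]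

lemma mkAlgHom_bV (v : Fin 2 → ℂ) : RingQuot.mkAlgHom ℂ (BRel Γ c) (bV Γ v) = oneV Γ c v := by
  simp [bV, oneV, oneX, Fintype.linearCombination_apply]

lemma satisfiesRankOneRelations_oneGHom_oneV :
    SatisfiesRankOneRelations (standardRep Γ) c (oneGHom Γ c) (oneV Γ c) where
  conj γ v := by
    have h := RingQuot.mkAlgHom_rel ℂ (BRel.grp_conj (c := c) γ v)
    simp only [map_mul, mkAlgHom_bV] at h
    exact h
  commutator := by
    have h := RingQuot.mkAlgHom_rel ℂ (BRel.comm (c := c))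
    simp only [map_sub, map_mul, map_add, map_one, map_sum, map_smul] at h
    rw [oneV_single, oneV_single]
    exact h

lemma adjoin_range_oneG_union_range_oneX :
    Algebra.adjoin ℂ (Set.range (oneG Γ c) ∪ Set.range (oneX Γ c)) = ⊤ := by
  rw [← adjoin_range_mkAlgHom_ι (BRel Γ c), ← Set.Sum.elim_range]
  congr 2
  ext (γ | p) <;> rfl

lemma adjoin_range_oneGHom_union_range_oneV :
    Algebra.adjoin ℂ (Set.range (oneGHom Γ c) ∪ Set.range (oneV Γ c)) = ⊤ := by
  refine top_unique ((adjoin_range_oneG_union_range_oneX Γ c).ge.trans (Algebra.adjoin_mono ?_))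
  refine Set.union_subset_union_right _ ?_
  rintro _ ⟨p, rfl⟩
  exact ⟨_, oneV_single Γ c p⟩

variable {Γ c} {A : Type*} [Ring A] [Algebra ℂ A] {e : Γ →* A} {x : (Fin 2 → ℂ) →ₗ[ℂ] A}

lemma lift_eq_of_BRel (h : SatisfiesRankOneRelations (standardRep Γ) c e x)
    {a b : FreeAlgebra ℂ (Γ ⊕ Fin 2)} (hab : BRel Γ c a b) :
    FreeAlgebra.lift ℂ (Sum.elim e fun p => x (Pi.single p 1)) a =
      FreeAlgebra.lift ℂ (Sum.elim e fun p => x (Pi.single p 1)) b := by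
  cases hab with
  | grp_mul γ δ => simp [bG]
  | grp_one => simp [bG]
  | grp_conj γ v =>
    rw [map_mul, map_mul, lift_bV, lift_bV, ← standardRep_apply, ← h.conj]
    simp [bG]
  | comm => simpa [bX, bG] using h.commutator

/-- The homomorphism out of `H_{1,c}(Γ)` given by its universal property. -/
def liftHone (h : SatisfiesRankOneRelations (standardRep Γ) c e x) : Hone Γ c →ₐ[ℂ] A :=
  RingQuot.liftAlgHom ℂ
    ⟨FreeAlgebra.lift ℂ (Sum.elim e fun p => x (Pi.single p 1)), fun _ _ => lift_eq_of_BRel h⟩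

lemma liftHone_oneG (h : SatisfiesRankOneRelations (standardRep Γ) c e x) (γ : Γ) :
    liftHone h (oneG Γ c γ) = e γ := by
  simp [liftHone, oneG, bG]

lemma liftHone_oneX (h : SatisfiesRankOneRelations (standardRep Γ) c e x) (p : Fin 2) :
    liftHone h (oneX Γ c p) = x (Pi.single p 1) := by
  simp [liftHone, oneX, bX]

end RankOneAlgebra

/-! ### The algebra `H_{1,k,c}(Γ_N)` -/

section WreathProduct

variable {N : ℕ}

lemma wphi_apply {Γ : Type} [Group Γ] (σ : Equiv.Perm (Fin N)) (f : Fin N → Γ) (i : Fin N) :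
    wphi Γ N σ f i = f (σ⁻¹ i) := rfl

lemma inr_mul_tG_mul_inr_inv {Γ : Type} [Group Γ] (σ : Equiv.Perm (Fin N)) (i : Fin N) (γ : Γ) :
    (SemidirectProduct.inr σ : WP Γ N) * tG i γ * SemidirectProduct.inr σ⁻¹ = tG (σ i) γ := by
  rw [tG, tG, ← SemidirectProduct.inl_aut]
  congr 1
  ext1 l
  obtain ⟨j, rfl⟩ := σ.surjective l
  simp [wphi_apply, Pi.mulSingle_apply]

lemma actL_single {Γ : Subgroup SL2} (g : WP Γ N) (i : Fin N) (v : Fin 2 → ℂ) :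
    actL Γ N g (Pi.single i v) =
      Pi.single (g.right i) (standardRep Γ (g.left (g.right i)) v) := by
  ext1 l
  obtain ⟨j, rfl⟩ := g.right.surjective l
  rcases eq_or_ne j i with rfl | hji
  · simp [actL, standardRep]
  · simp [actL, hji, g.right.injective.ne hji]

end WreathProduct

section WreathAlgebra

variable (Γ : Subgroup SL2) [Fintype Γ] [DecidableEq Γ] (N : ℕ) (k : ℂ) (c : Γ → ℂ)

/-- The group homomorphism `g ↦ g` from `Γ_N` to `H_{1,k,c}(Γ_N)`. -/
def hGHom : WP Γ N →* HN Γ N k c where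
  toFun := hG Γ N k c
  map_one' := by simpa [hG] using RingQuot.mkAlgHom_rel ℂ (HRel.grp_one (k := k) (c := c))
  map_mul' g h := by
    simpa [hG] using (RingQuot.mkAlgHom_rel ℂ (HRel.grp_mul (k := k) (c := c) g h)).symm

variable {N}

/-- The group homomorphism `γ ↦ γ_i` from `Γ` to `H_{1,k,c}(Γ_N)`. -/
def factorGHom (i : Fin N) : Γ →* HN Γ N k c :=
  (hGHom Γ N k c).comp (SemidirectProduct.inl.comp (MonoidHom.mulSingle (fun _ => Γ) i))

lemma factorGHom_apply (i : Fin N) (γ : Γ) :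
    factorGHom Γ k c i γ = hGHom Γ N k c (tG i γ) := rfl

/-- The linear map from the `i`-th summand of `V = L^{⊕N}` to `H_{1,k,c}(Γ_N)`,
`v ↦ v₀ x_i + v₁ y_i`. -/
def factorV (i : Fin N) : (Fin 2 → ℂ) →ₗ[ℂ] HN Γ N k c :=
  Fintype.linearCombination ℂ (hX Γ N k c i)

lemma factorV_single (i : Fin N) (p : Fin 2) :
    factorV Γ k c i (Pi.single p 1) = hX Γ N k c i p := by
  simp [factorV, Fintype.linearCombination_apply_single]

lemma mkAlgHom_nV_single (i : Fin N) (v : Fin 2 → ℂ) :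
    RingQuot.mkAlgHom ℂ (HRel Γ N k c) (nV Γ N (Pi.single i v)) = factorV Γ k c i v := by
  rw [nV, Finset.sum_eq_single i (fun j _ hj => by simp [Pi.single_eq_of_ne hj]) (by simp)]
  simp [factorV, hX, Fintype.linearCombination_apply]

lemma hGHom_conj_factorV (g : WP Γ N) (i : Fin N) (v : Fin 2 → ℂ) :
    hGHom Γ N k c g * factorV Γ k c i v * hGHom Γ N k c g⁻¹ =
      factorV Γ k c (g.right i) (standardRep Γ (g.left (g.right i)) v) := by
  have h := RingQuot.mkAlgHom_rel ℂ (HRel.grp_conj (k := k) (c := c) g (Pi.single i v))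
  simp only [map_mul, actL_single, mkAlgHom_nV_single] at h
  exact h

lemma semiconjBy_hGHom_factorV (g : WP Γ N) (i : Fin N) (v : Fin 2 → ℂ) :
    SemiconjBy (hGHom Γ N k c g) (factorV Γ k c i v)
      (factorV Γ k c (g.right i) (standardRep Γ (g.left (g.right i)) v)) := by
  rw [SemiconjBy, ← hGHom_conj_factorV, mul_assoc _ _ (hGHom Γ N k c g), ← map_mul,
    inv_mul_cancel, map_one, mul_one]

lemma commute_factorGHom {i j : Fin N} (hij : i ≠ j) (γ δ : Γ) :
    Commute (factorGHom Γ k c i γ) (factorGHom Γ k c j δ) :=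
  ((Pi.mulSingle_commute (f := fun _ => Γ) hij γ δ).map SemidirectProduct.inl).map (hGHom Γ N k c)

lemma commute_factorGHom_factorV {i j : Fin N} (hij : i ≠ j) (γ : Γ) (v : Fin 2 → ℂ) :
    Commute (factorGHom Γ k c i γ) (factorV Γ k c j v) := by
  have h := semiconjBy_hGHom_factorV Γ k c (tG i γ) j v
  simpa [Commute, factorGHom_apply, tG, Pi.mulSingle_eq_of_ne hij.symm] using h

lemma adjoin_range_hG_union_range_hX :
    Algebra.adjoin ℂ (Set.range (hG Γ N k c) ∪ Set.range fun ip : Fin N × Fin 2 =>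
      hX Γ N k c ip.1 ip.2) = ⊤ := by
  rw [← adjoin_range_mkAlgHom_ι (HRel Γ N k c), ← Set.Sum.elim_range]
  congr 2
  ext (g | ip) <;> rfl

end WreathAlgebra

section ZeroCoupling

variable (Γ : Subgroup SL2) [Fintype Γ] [DecidableEq Γ] {N : ℕ} (c : Γ → ℂ)

lemma commute_factorV {i j : Fin N} (hij : i ≠ j) (u v : Fin 2 → ℂ) :
    Commute (factorV Γ 0 c i u) (factorV Γ 0 c j v) := by
  have h := RingQuot.mkAlgHom_rel ℂ (HRel.r2 (k := 0) (c := c) i j hij u v)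
  simp only [map_sub, map_mul, mkAlgHom_nV_single, zero_div, neg_zero, zero_smul, map_zero] at h
  exact sub_eq_zero.mp h

lemma satisfiesRankOneRelations_factor (i : Fin N) :
    SatisfiesRankOneRelations (standardRep Γ) c (factorGHom Γ 0 c i) (factorV Γ 0 c i) where
  conj γ v := by
    have h := hGHom_conj_factorV Γ 0 c (tG i γ) i v
    simpa [factorGHom_apply, tG, Pi.mulSingle_inv] using h
  commutator := by
    have h := RingQuot.mkAlgHom_rel ℂ (HRel.r1 (Γ := Γ) (k := 0) (c := c) i)
    simp only [map_sub, map_mul, map_add, map_one, map_sum, map_smul, zero_div, zero_smul,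
      add_zero] at h
    rw [factorV_single, factorV_single]
    exact h

/-- The embedding of `H_{1,c}(Γ)` as the `i`-th factor of
`H_{1,0,c}(Γ_N) = S_N ⋉ H_{1,c}(Γ)^{⊗N}`. -/
def factorEmbedding (i : Fin N) : Hone Γ c →ₐ[ℂ] HN Γ N 0 c :=
  liftHone (satisfiesRankOneRelations_factor Γ c i)

lemma factorEmbedding_oneG (i : Fin N) (γ : Γ) :
    factorEmbedding Γ c i (oneG Γ c γ) = factorGHom Γ 0 c i γ :=
  liftHone_oneG _ γ

lemma factorEmbedding_oneX (i : Fin N) (p : Fin 2) :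
    factorEmbedding Γ c i (oneX Γ c p) = factorV Γ 0 c i (Pi.single p 1) :=
  liftHone_oneX _ p

lemma commute_factorEmbedding (i j : Fin N) (hij : i ≠ j) (a b : Hone Γ c) :
    Commute (factorEmbedding Γ c i a) (factorEmbedding Γ c j b) := by
  refine commute_map_of_adjoin_eq_top (adjoin_range_oneG_union_range_oneX Γ c) ?_ a b
  rintro _ (⟨γ, rfl⟩ | ⟨p, rfl⟩) _ (⟨δ, rfl⟩ | ⟨q, rfl⟩) <;>
    simp only [factorEmbedding_oneG, factorEmbedding_oneX]
  · exact commute_factorGHom Γ 0 c hij γ δ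
  · exact commute_factorGHom_factorV Γ 0 c hij γ _
  · exact (commute_factorGHom_factorV Γ 0 c hij.symm δ _).symm
  · exact commute_factorV Γ c hij _ _

variable (N) in
/-- The group homomorphism `σ ↦ σ` from `S_N` to `H_{1,0,c}(Γ_N)`. -/
def permHom : Equiv.Perm (Fin N) →* HN Γ N 0 c :=
  (hGHom Γ N 0 c).comp SemidirectProduct.inr

lemma semiconjBy_permHom_factorEmbedding (σ : Equiv.Perm (Fin N)) (i : Fin N) (b : Hone Γ c) :
    SemiconjBy (permHom Γ N c σ) (factorEmbedding Γ c i b) (factorEmbedding Γ c (σ i) b) := by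
  refine semiconjBy_map_of_adjoin_eq_top (adjoin_range_oneG_union_range_oneX Γ c) ?_ b
  rintro _ (⟨γ, rfl⟩ | ⟨p, rfl⟩)
  · rw [factorEmbedding_oneG, factorEmbedding_oneG, factorGHom_apply, factorGHom_apply,
      ← inr_mul_tG_mul_inr_inv σ i γ]
    refine SemiconjBy.map ?_ (hGHom Γ N 0 c)
    rw [map_inv]
    exact SemiconjBy.conj_mk _ _
  · rw [factorEmbedding_oneX, factorEmbedding_oneX]
    simpa [permHom] using
      semiconjBy_hGHom_factorV Γ 0 c (SemidirectProduct.inr σ) i (Pi.single p 1)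

lemma permHom_conj_factorEmbedding (σ : Equiv.Perm (Fin N)) (i : Fin N) (b : Hone Γ c) :
    permHom Γ N c σ * factorEmbedding Γ c i b * permHom Γ N c σ⁻¹ =
      factorEmbedding Γ c (σ • i) b := by
  rw [(semiconjBy_permHom_factorEmbedding Γ c σ i b).eq, mul_assoc, ← map_mul, mul_inv_cancel,
    map_one, mul_one, Equiv.Perm.smul_def]

lemma hG_mem_of_factorGHom_mem_of_permHom_mem {S : Subalgebra ℂ (HN Γ N 0 c)}
    (hfactor : ∀ i γ, factorGHom Γ 0 c i γ ∈ S) (hperm : ∀ σ, permHom Γ N c σ ∈ S)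
    (g : WP Γ N) : hG Γ N 0 c g ∈ S := by
  have hleft : g.left ∈
      (S.toSubmonoid.comap (hGHom Γ N 0 c)).comap (SemidirectProduct.inl (φ := wphi Γ N)) :=
    Submonoid.pi_mem_of_mulSingle_mem _ fun i => hfactor i (g.left i)
  change hGHom Γ N 0 c g ∈ S
  rw [← SemidirectProduct.inl_left_mul_inr_right g, map_mul]
  exact S.mul_mem hleft (hperm g.right)

variable (N) in
lemma adjoin_range_factorEmbedding_union_range_permHom :
    Algebra.adjoin ℂ ((⋃ i, Set.range (factorEmbedding Γ c i)) ∪ Set.range (permHom Γ N c)) =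
      ⊤ := by
  refine top_unique ((adjoin_range_hG_union_range_hX Γ 0 c).ge.trans (Algebra.adjoin_le ?_))
  have hfactor : ∀ i b, factorEmbedding Γ c i b ∈ Algebra.adjoin ℂ
      ((⋃ i, Set.range (factorEmbedding Γ c i)) ∪ Set.range (permHom Γ N c)) := fun i b =>
    Algebra.subset_adjoin (Or.inl (Set.mem_iUnion_of_mem i ⟨b, rfl⟩))
  rintro _ (⟨g, rfl⟩ | ⟨⟨i, p⟩, rfl⟩)
  · refine hG_mem_of_factorGHom_mem_of_permHom_mem Γ c (fun i γ => ?_) (fun σ => ?_) g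
    · exact factorEmbedding_oneG Γ c i γ ▸ hfactor i _
    · exact Algebra.subset_adjoin (Or.inr ⟨σ, rfl⟩)
  · change hX Γ N 0 c i p ∈ _
    rw [← factorV_single, ← factorEmbedding_oneX]
    exact hfactor i _

end ZeroCoupling

/-! ### The module `W ⊗ Y^{⊗N}` -/

section TensorFactors

lemma linearMap_ext_tmul_tprod {R ι Y W P : Type*} [CommRing R] [AddCommGroup Y] [Module R Y]
    [AddCommGroup W] [Module R W] [AddCommGroup P] [Module R P]
    {f g : W ⊗[R] (⨂[R] _ : ι, Y) →ₗ[R] P}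
    (h : ∀ w v, f (w ⊗ₜ[R] PiTensorProduct.tprod R v) = g (w ⊗ₜ[R] PiTensorProduct.tprod R v)) :
    f = g := by
  ext w v
  exact h w v

variable {R ι Y : Type*} [CommRing R] [DecidableEq ι] [AddCommGroup Y] [Module R Y]

/-- The endomorphism `id ⊗ ⋯ ⊗ T ⊗ ⋯ ⊗ id` of `Y^{⊗ι}` with `T` in the `i`-th place, as a linear
function of `T`. -/
def piTensorFactorMap (i : ι) : Module.End R Y →ₗ[R] Module.End R (⨂[R] _ : ι, Y) :=
  (PiTensorProduct.mapMultilinear R (fun _ : ι => Y) fun _ => Y).toLinearMap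
    (fun _ => LinearMap.id) i

lemma piTensorFactorMap_tprod (i : ι) (T : Module.End R Y) (v : ι → Y) :
    piTensorFactorMap i T (PiTensorProduct.tprod R v) =
      PiTensorProduct.tprod R (Function.update v i (T (v i))) := by
  rw [piTensorFactorMap, MultilinearMap.toLinearMap_apply, PiTensorProduct.mapMultilinear_apply,
    PiTensorProduct.map_tprod]
  congr 1
  ext l
  rcases eq_or_ne l i with rfl | hl <;> simp [*]

lemma piTensorFactorMap_one (i : ι) : piTensorFactorMap i (1 : Module.End R Y) = 1 := by
  ext v
  simp [piTensorFactorMap_tprod]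

lemma piTensorFactorMap_mul (i : ι) (T T' : Module.End R Y) :
    piTensorFactorMap i (T * T') = piTensorFactorMap i T * piTensorFactorMap i T' := by
  ext v
  simp [piTensorFactorMap_tprod]

variable (W : Type*) [AddCommGroup W] [Module R W]

/-- Endomorphisms of `Y` acting on the `i`-th factor of `Y^{⊗ι}` inside `W ⊗ Y^{⊗ι}`. -/
def factorEnd (i : ι) : Module.End R Y →ₐ[R] Module.End R (W ⊗[R] (⨂[R] _ : ι, Y)) :=
  (Module.End.lTensorAlgHom R _ W).comp
    (AlgHom.ofLinearMap (piTensorFactorMap i) (piTensorFactorMap_one i) (piTensorFactorMap_mul i))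

lemma factorEnd_tmul_tprod (i : ι) (T : Module.End R Y) (w : W) (v : ι → Y) :
    factorEnd W i T (w ⊗ₜ[R] PiTensorProduct.tprod R v) =
      w ⊗ₜ[R] PiTensorProduct.tprod R (Function.update v i (T (v i))) := by
  rw [← piTensorFactorMap_tprod]
  rfl

end TensorFactors

section ModuleStructure

variable {Γ : Subgroup SL2} [Fintype Γ] [DecidableEq Γ] {c : Γ → ℂ} {N : ℕ}
  {Y W : Type*} [AddCommGroup Y] [Module ℂ Y] [AddCommGroup W] [Module ℂ W]
  {ρY : Hone Γ c →ₐ[ℂ] Module.End ℂ Y} {ρW : Representation ℂ (Equiv.Perm (Fin N)) W}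
  {ρM : HN Γ N 0 c →ₐ[ℂ] Module.End ℂ (W ⊗[ℂ] (⨂[ℂ] _ : Fin N, Y))}

lemma comp_factorEmbedding_eq_factorEnd_comp
    (hMG : ∀ (g : WP Γ N) (w : W) (v : Fin N → Y),
      ρM (hG Γ N 0 c g) (w ⊗ₜ[ℂ] PiTensorProduct.tprod ℂ v) =
        ρW g.right w ⊗ₜ[ℂ]
          PiTensorProduct.tprod ℂ fun i => ρY (oneG Γ c (g.left i)) (v (g.right⁻¹ i)))
    (hMX : ∀ (i : Fin N) (p : Fin 2) (w : W) (v : Fin N → Y),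
      ρM (hX Γ N 0 c i p) (w ⊗ₜ[ℂ] PiTensorProduct.tprod ℂ v) =
        w ⊗ₜ[ℂ] PiTensorProduct.tprod ℂ fun l =>
          if l = i then ρY (oneX Γ c p) (v l) else v l) (i : Fin N) :
    ρM.comp (factorEmbedding Γ c i) = (factorEnd W i).comp ρY := by
  refine AlgHom.ext_of_adjoin_eq_top (adjoin_range_oneG_union_range_oneX Γ c) ?_
  rintro _ (⟨γ, rfl⟩ | ⟨p, rfl⟩) <;> refine linearMap_ext_tmul_tprod fun w v => ?_ <;>
    rw [AlgHom.comp_apply, AlgHom.comp_apply, factorEnd_tmul_tprod]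
  · have hone : oneG Γ c 1 = 1 := map_one (oneGHom Γ c)
    rw [factorEmbedding_oneG]
    refine (hMG (tG i γ) w v).trans ?_
    congr 2
    · simp [tG]
    · ext l
      rcases eq_or_ne l i with rfl | hl <;> simp [tG, *]
  · rw [factorEmbedding_oneX, factorV_single, hMX]
    congr 2
    ext l
    rcases eq_or_ne l i with rfl | hl <;> simp [*]

theorem derivationsAlong_le_range_innerDerivation_of_factorEnd
    [FiniteDimensional ℂ Y] [Nontrivial Y] (hρY : Function.Surjective ρY)
    (hρM : ∀ i, ρM.comp (factorEmbedding Γ c i) = (factorEnd W i).comp ρY) :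
    derivationsAlong ρM ≤ LinearMap.range (innerDerivation ρM) := by
  have := invertibleOfNonzero (Nat.cast_ne_zero.mpr Fintype.card_ne_zero :
    (Fintype.card (Equiv.Perm (Fin N)) : ℂ) ≠ 0)
  have hinnerY : derivationsAlong ρY ≤ LinearMap.range (innerDerivation ρY) :=
    (satisfiesRankOneRelations_oneGHom_oneV Γ c).derivationsAlong_le_range_innerDerivation
      (standardRep_injective Γ) (det_standardRep Γ) (adjoin_range_oneGHom_union_range_oneV Γ c) hρY
  refine derivationsAlong_le_range_of_permuted_commuting_family (factorEmbedding Γ c)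
    (commute_factorEmbedding Γ c) (permHom Γ N c) (permHom_conj_factorEmbedding Γ c)
    (adjoin_range_factorEmbedding_union_range_permHom Γ N c) fun i δ hδ => ?_
  rw [hρM] at hδ ⊢
  exact exists_mem_adjoin_eq_innerDerivation_of_comp_end hρY hinnerY (factorEnd W i) hδ

end ModuleStructure

/-! ### Hochschild cocycles and derivations -/

section Hochschild

variable {A M : Type} [Ring A] [Algebra ℂ A] [AddCommGroup M] [Module ℂ M]
  {ρ : A →ₐ[ℂ] Module.End ℂ M}

/-- A 1-cochain, seen as a linear map of its single argument. -/
def cochainLinearMap {E : Type} [AddCommGroup E] [Module ℂ E] (φ : Cochain A E 1) : A →ₗ[ℂ] E :=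
  φ.toLinearMap 0 0

lemma cochainLinearMap_apply {E : Type} [AddCommGroup E] [Module ℂ E] (φ : Cochain A E 1)
    (a : Fin 1 → A) : cochainLinearMap φ (a 0) = φ a :=
  congrArg φ (funext fun j => by rw [Subsingleton.elim j 0, Function.update_self])

lemma dF_bimodEnd_one (φ : Cochain A (Module.End ℂ M) 1) (a b : A) :
    dF (bimodEnd ρ) φ ![a, b] = ρ a * cochainLinearMap φ b - cochainLinearMap φ (a * b) +
      cochainLinearMap φ a * ρ b := by
  simp only [dF, ← cochainLinearMap_apply, bimodEnd]
  simp [sub_eq_add_neg]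

lemma dF_bimodEnd_zero (ψ : Cochain A (Module.End ℂ M) 0) (a : Fin 1 → A) :
    dF (bimodEnd ρ) ψ a = ρ (a 0) * ψ 0 - ψ 0 * ρ (a 0) := by
  have hψ (u : Fin 0 → A) : ψ u = ψ 0 := congrArg ψ (Subsingleton.elim u 0)
  simp [dF, bimodEnd, sub_eq_add_neg, hψ]

lemma cochainLinearMap_mem_derivationsAlong {φ : Cochain A (Module.End ℂ M) 1}
    (hφ : φ ∈ Zc (bimodEnd ρ) 1) : cochainLinearMap φ ∈ derivationsAlong ρ := fun a b => by
  have h : dF (bimodEnd ρ) φ ![a, b] = 0 := hφ ![a, b]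
  rw [dF_bimodEnd_one, sub_add_eq_add_sub, sub_eq_zero] at h
  exact h.symm

theorem Zc_bimodEnd_one_le_Bc_zero
    (h : derivationsAlong ρ ≤ LinearMap.range (innerDerivation ρ)) :
    Zc (bimodEnd ρ) 1 ≤ Bc (bimodEnd ρ) 0 := by
  intro φ hφ
  obtain ⟨T, hT⟩ := h (cochainLinearMap_mem_derivationsAlong hφ)
  refine ⟨MultilinearMap.constOfIsEmpty ℂ _ (-T), fun a => ?_⟩
  rw [dF_bimodEnd_zero, ← cochainLinearMap_apply, ← hT, innerDerivation_apply,
    MultilinearMap.constOfIsEmpty_apply, Function.const_apply]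
  noncomm_ring

end Hochschild

end SymplecticReflection

end

theorem stmt_19_general (Γ : Subgroup SL2) [Fintype Γ] [DecidableEq Γ] (c : Γ → ℂ) (N : ℕ)
    (Y : Type) [AddCommGroup Y] [Module ℂ Y] [FiniteDimensional ℂ Y] [Nontrivial Y]
    (ρY : Hone Γ c →ₐ[ℂ] Module.End ℂ Y)
    (hYirr : ∀ U : Submodule ℂ Y, (∀ b : Hone Γ c, U.map (ρY b) ≤ U) → U = ⊥ ∨ U = ⊤)
    (W : Type) [AddCommGroup W] [Module ℂ W]
    (ρW : Representation ℂ (Equiv.Perm (Fin N)) W)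
    (ρM : HN Γ N 0 c →ₐ[ℂ] Module.End ℂ (W ⊗[ℂ] (⨂[ℂ] _ : Fin N, Y)))
    (hMG : ∀ (g : WP Γ N) (w : W) (v : Fin N → Y),
      ρM (hG Γ N 0 c g) (w ⊗ₜ[ℂ] PiTensorProduct.tprod ℂ v) =
        ρW g.right w ⊗ₜ[ℂ]
          PiTensorProduct.tprod ℂ fun i => ρY (oneG Γ c (g.left i)) (v (g.right⁻¹ i)))
    (hMX : ∀ (i : Fin N) (p : Fin 2) (w : W) (v : Fin N → Y),
      ρM (hX Γ N 0 c i p) (w ⊗ₜ[ℂ] PiTensorProduct.tprod ℂ v) =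
        w ⊗ₜ[ℂ] PiTensorProduct.tprod ℂ fun l =>
          if l = i then ρY (oneX Γ c p) (v l) else v l) :
    Zc (bimodEnd ρM) 1 ≤ Bc (bimodEnd ρM) 0 :=
  SymplecticReflection.Zc_bimodEnd_one_le_Bc_zero
    (SymplecticReflection.derivationsAlong_le_range_innerDerivation_of_factorEnd
      (SymplecticReflection.surjective_of_irreducible hYirr)
      (SymplecticReflection.comp_factorEmbedding_eq_factorEnd_comp hMG hMX))

/-- let `A = H_{1,0,c}(Γ_N)` (parameter `k = 0`), `B = H_{1,c}(Γ)`, `Y` a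
finite dimensional irreducible `B`-module, and `W` a finite dimensional irreducible
representation of `S_N` with `Hom_{S_N}(𝔥 ⊗ W, W) = 0` (`𝔥` the reflection
representation), and let `M = W ⊗ Y^{⊗N}` be the `A`-module on which `Γ^N` acts
factorwise, `S_N` acts on `W` while permuting the tensor factors, and `x_i, y_i` act as
`x, y` on the `i`-th tensor factor.  Then the Hochschild cohomology `H¹(A, End_ℂ M)`
vanishes: every 1-cocycle is a coboundary. -/
theorem stmt_19 (Γ : Subgroup SL2) [Fintype Γ] [DecidableEq Γ] (c : Γ → ℂ) (N : ℕ)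
    (Y : Type) [AddCommGroup Y] [Module ℂ Y] [FiniteDimensional ℂ Y] [Nontrivial Y]
    (ρY : Hone Γ c →ₐ[ℂ] Module.End ℂ Y)
    (hYirr : ∀ U : Submodule ℂ Y, (∀ b : Hone Γ c, U.map (ρY b) ≤ U) → U = ⊥ ∨ U = ⊤)
    (W : Type) [AddCommGroup W] [Module ℂ W] [FiniteDimensional ℂ W] [Nontrivial W]
    (ρW : Representation ℂ (Equiv.Perm (Fin N)) W)
    (hWirr : ∀ U : Submodule ℂ W,
      (∀ σ : Equiv.Perm (Fin N), U.map (ρW σ) ≤ U) → U = ⊥ ∨ U = ⊤)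
    -- the rectangle condition: `Hom_{S_N}(𝔥 ⊗ W, W) = 0`
    (hrect : ∀ T : (↥(hplane N) ⊗[ℂ] W) →ₗ[ℂ] W,
      (∀ (σ : Equiv.Perm (Fin N)) (v : hplane N) (w : W),
        T (permH σ v ⊗ₜ[ℂ] ρW σ w) = ρW σ (T (v ⊗ₜ[ℂ] w))) → T = 0)
    -- the `A`-module structure on `M = W ⊗ Y^{⊗N}`
    (ρM : HN Γ N 0 c →ₐ[ℂ] Module.End ℂ (W ⊗[ℂ] (⨂[ℂ] _ : Fin N, Y)))
    (hMG : ∀ (g : WP Γ N) (w : W) (v : Fin N → Y),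
      ρM (hG Γ N 0 c g) (w ⊗ₜ[ℂ] PiTensorProduct.tprod ℂ v) =
        ρW g.right w ⊗ₜ[ℂ]
          PiTensorProduct.tprod ℂ fun i => ρY (oneG Γ c (g.left i)) (v (g.right⁻¹ i)))
    (hMX : ∀ (i : Fin N) (p : Fin 2) (w : W) (v : Fin N → Y),
      ρM (hX Γ N 0 c i p) (w ⊗ₜ[ℂ] PiTensorProduct.tprod ℂ v) =
        w ⊗ₜ[ℂ] PiTensorProduct.tprod ℂ fun l =>
          if l = i then ρY (oneX Γ c p) (v l) else v l) :
    Zc (bimodEnd ρM) 1 ≤ Bc (bimodEnd ρM) 0 :=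
  stmt_19_general Γ c N Y ρY hYirr W ρW ρM hMG hMX
end
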